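/- arXiv:1611.01313 — 4 statements merged into one kernel-verified Lean document; each statement's English description precedes it below -/
import Mathlib

section
/- Let F be a free group and R, S, T normal subgroups of F with R ⊆ T. Then, inside ℤ[F], Δ(R)Δ(S)Δ(T) ∩ Δ(R)Δ(R∩S) = Δ(R)Δ(R∩S)Δ(R) + Δ(R)Δ(R ∩ (S∩T)'), where (S∩T)' is the derived subgroup of S∩T. -/
/-! Group-ring preliminaries: for a subgroup `N` of `F`, `aug N` is the additive
subgroup `Δ(N)` of `ℤ[F]` generated by `{n - 1 : n ∈ N}`, and `augI N = Δ(N)ℤ[F]`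
is the corresponding (for normal `N` two-sided) ideal of `ℤ[F]`.  Products of
submodules are additive spans of products, as in the paper. -/

/-- the augmentation ideal `Δ(N)` of a subgroup `N ≤ F`, inside `ℤ[F]` -/
noncomputable def aug {F : Type} [Group F] (N : Subgroup F) :
    Submodule ℤ (MonoidAlgebra ℤ F) :=
  Submodule.span ℤ {x | ∃ n ∈ N, x = (MonoidAlgebra.of ℤ F n) - 1}

/-- the ideal `𝐧 = Δ(N)ℤ[F]` of `ℤ[F]` -/
noncomputable def augI {F : Type} [Group F] (N : Subgroup F) :
    Submodule ℤ (MonoidAlgebra ℤ F) :=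
  aug N * ⊤

section helpers

variable {F : Type} [Group F]

/-- extension of a function on `F` to a linear map on `ℤ[F]` -/
theorem il_exists_lin {V : Type*} [AddCommGroup V] (g : F → V) :
    ∃ L : MonoidAlgebra ℤ F →ₗ[ℤ] V, ∀ f, L (MonoidAlgebra.of ℤ F f) = g f := by
  refine ⟨(Finsupp.lift V ℤ F g) ∘ₗ (MonoidAlgebra.coeffLinearEquiv ℤ).toLinearMap, fun f => ?_⟩
  simp [MonoidAlgebra.of_apply]

theorem il_mul_le_mul {A B C D : Submodule ℤ (MonoidAlgebra ℤ F)} (h : A ≤ B) (h' : C ≤ D) :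
    A * C ≤ B * D :=
  Submodule.mul_le.2 fun _ ha _ hc => Submodule.mul_mem_mul (h ha) (h' hc)

theorem il_add_mem {A B : Submodule ℤ (MonoidAlgebra ℤ F)} {a b : MonoidAlgebra ℤ F}
    (ha : a ∈ A) (hb : b ∈ B) : a + b ∈ A + B :=
  Submodule.add_mem_sup ha hb

/-- the additive subgroup `ℤ[H]` of `ℤ[F]` -/
noncomputable def ilGr (H : Subgroup F) : Submodule ℤ (MonoidAlgebra ℤ F) :=
  Submodule.span ℤ {x | ∃ h ∈ H, x = MonoidAlgebra.of ℤ F h}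

theorem il_of_mem (H : Subgroup F) {h : F} (hh : h ∈ H) : MonoidAlgebra.of ℤ F h ∈ ilGr H :=
  Submodule.subset_span ⟨h, hh, rfl⟩

theorem il_sub_mem (H : Subgroup F) {h : F} (hh : h ∈ H) : MonoidAlgebra.of ℤ F h - 1 ∈ aug H :=
  Submodule.subset_span ⟨h, hh, rfl⟩

theorem il_aug_le (H : Subgroup F) (P : Submodule ℤ (MonoidAlgebra ℤ F))
    (h : ∀ n ∈ H, MonoidAlgebra.of ℤ F n - 1 ∈ P) : aug H ≤ P := by
  refine Submodule.span_le.2 ?_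
  rintro _ ⟨n, hn, rfl⟩
  exact h n hn

theorem il_gr_le (H : Subgroup F) (P : Submodule ℤ (MonoidAlgebra ℤ F))
    (h : ∀ n ∈ H, MonoidAlgebra.of ℤ F n ∈ P) : ilGr H ≤ P := by
  refine Submodule.span_le.2 ?_
  rintro _ ⟨n, hn, rfl⟩
  exact h n hn

theorem il_gr_top : (ilGr (⊤ : Subgroup F)) = ⊤ := by
  refine eq_top_iff.2 fun x _ => ?_
  induction x using MonoidAlgebra.induction_linear with
  | zero => exact zero_mem _
  | add f g hf hg => exact add_mem (hf trivial) (hg trivial)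
  | single a b =>
    have : MonoidAlgebra.single a b = b • MonoidAlgebra.of ℤ F a := by
      simp [MonoidAlgebra.of_apply]
    rw [this]
    exact Submodule.smul_mem _ _ (il_of_mem _ trivial)

theorem il_aug_mul_le (H : Subgroup F) (A P : Submodule ℤ (MonoidAlgebra ℤ F))
    (h : ∀ n ∈ H, ∀ a ∈ A, (MonoidAlgebra.of ℤ F n - 1) * a ∈ P) : aug H * A ≤ P := by
  refine Submodule.mul_le.2 fun x hx a ha => ?_
  have : aug H ≤ P.comap (LinearMap.mulRight ℤ a) :=
    il_aug_le _ _ fun n hn => by simpa using h n hn a ha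
  simpa using this hx

theorem il_mul_aug_le (H : Subgroup F) (A P : Submodule ℤ (MonoidAlgebra ℤ F))
    (h : ∀ n ∈ H, ∀ a ∈ A, a * (MonoidAlgebra.of ℤ F n - 1) ∈ P) : A * aug H ≤ P := by
  refine Submodule.mul_le.2 fun a ha x hx => ?_
  have : aug H ≤ P.comap (LinearMap.mulLeft ℤ a) :=
    il_aug_le _ _ fun n hn => by simpa using h n hn a ha
  simpa using this hx

theorem il_gr_mul_le (H : Subgroup F) (A P : Submodule ℤ (MonoidAlgebra ℤ F))
    (h : ∀ n ∈ H, ∀ a ∈ A, (MonoidAlgebra.of ℤ F n) * a ∈ P) : ilGr H * A ≤ P := by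
  refine Submodule.mul_le.2 fun x hx a ha => ?_
  have : ilGr H ≤ P.comap (LinearMap.mulRight ℤ a) :=
    il_gr_le _ _ fun n hn => by simpa using h n hn a ha
  simpa using this hx

theorem il_mul_gr_le (H : Subgroup F) (A P : Submodule ℤ (MonoidAlgebra ℤ F))
    (h : ∀ n ∈ H, ∀ a ∈ A, a * (MonoidAlgebra.of ℤ F n) ∈ P) : A * ilGr H ≤ P := by
  refine Submodule.mul_le.2 fun a ha x hx => ?_
  have : ilGr H ≤ P.comap (LinearMap.mulLeft ℤ a) :=
    il_gr_le _ _ fun n hn => by simpa using h n hn a ha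
  simpa using this hx

theorem il_aug_mono {H K : Subgroup F} (h : H ≤ K) : aug H ≤ aug K :=
  il_aug_le _ _ fun _ hn => il_sub_mem _ (h hn)

theorem il_aug_le_gr (H : Subgroup F) : aug H ≤ ilGr H :=
  il_aug_le _ _ fun n hn => sub_mem (il_of_mem _ hn) (by
    have := il_of_mem H H.one_mem
    rwa [map_one] at this)

theorem il_gr_mul_gr (H : Subgroup F) : ilGr H * ilGr H ≤ ilGr H :=
  il_gr_mul_le _ _ _ fun n hn a ha => by
    have : ilGr H ≤ (ilGr H).comap (LinearMap.mulLeft ℤ (MonoidAlgebra.of ℤ F n)) :=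
      il_gr_le _ _ fun m hm => by
        simpa only [Submodule.mem_comap, LinearMap.mulLeft_apply, ← map_mul] using
          il_of_mem H (H.mul_mem hn hm)
    exact this ha

theorem il_aug_mul_gr (H : Subgroup F) : aug H * ilGr H ≤ aug H :=
  il_aug_mul_le _ _ _ fun n hn a ha => by
    have : ilGr H ≤ (aug H).comap (LinearMap.mulLeft ℤ (MonoidAlgebra.of ℤ F n - 1)) :=
      il_gr_le _ _ fun m hm => by
        have e : (MonoidAlgebra.of ℤ F n - 1) * MonoidAlgebra.of ℤ F m =
          (MonoidAlgebra.of ℤ F (n * m) - 1) - (MonoidAlgebra.of ℤ F m - 1) := by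
          rw [map_mul]; noncomm_ring
        simp only [Submodule.mem_comap, LinearMap.mulLeft_apply]
        rw [e]
        exact sub_mem (il_sub_mem H (H.mul_mem hn hm)) (il_sub_mem H hm)
    exact this ha

theorem il_aug_mul_aug (H : Subgroup F) : aug H * aug H ≤ aug H :=
  (il_mul_le_mul le_rfl (il_aug_le_gr H)).trans (il_aug_mul_gr H)

/-- every element of `Δ(N)` is `n - 1` modulo `Δ(N)²` -/
theorem il_aug_mod (N : Subgroup F) {x : MonoidAlgebra ℤ F} (hx : x ∈ aug N) :
    ∃ n ∈ N, x - (MonoidAlgebra.of ℤ F n - 1) ∈ aug N * aug N := by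
  refine Submodule.span_induction (p := fun x _ =>
    ∃ n ∈ N, x - (MonoidAlgebra.of ℤ F n - 1) ∈ aug N * aug N) ?_ ?_ ?_ ?_ hx
  · rintro _ ⟨n, hn, rfl⟩
    exact ⟨n, hn, by simp⟩
  · exact ⟨1, N.one_mem, by rw [map_one]; simp⟩
  · rintro x y - - ⟨n, hn, h1⟩ ⟨m, hm, h2⟩
    refine ⟨n * m, N.mul_mem hn hm, ?_⟩
    have e : x + y - (MonoidAlgebra.of ℤ F (n * m) - 1) = (x - (MonoidAlgebra.of ℤ F n - 1)) +
      (y - (MonoidAlgebra.of ℤ F m - 1)) -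
      (MonoidAlgebra.of ℤ F n - 1) * (MonoidAlgebra.of ℤ F m - 1) := by
      rw [map_mul]; noncomm_ring
    rw [e]
    exact sub_mem (add_mem h1 h2) (Submodule.mul_mem_mul (il_sub_mem _ hn) (il_sub_mem _ hm))
  · -- scalar multiples: reduce to integer powers
    rintro a x - ⟨n, hn, h1⟩
    have key : ∀ a : ℤ, a • (MonoidAlgebra.of ℤ F n - 1) - (MonoidAlgebra.of ℤ F (n ^ a) - 1) ∈
        aug N * aug N := by
      intro a
      have step : ∀ b : ℤ, MonoidAlgebra.of ℤ F (n ^ (b + 1)) - 1 =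
          (MonoidAlgebra.of ℤ F (n ^ b) - 1) + (MonoidAlgebra.of ℤ F n - 1) +
          (MonoidAlgebra.of ℤ F (n ^ b) - 1) * (MonoidAlgebra.of ℤ F n - 1) := by
        intro b
        rw [zpow_add_one, map_mul]; noncomm_ring
      have mem : ∀ b : ℤ, (MonoidAlgebra.of ℤ F (n ^ b) - 1) * (MonoidAlgebra.of ℤ F n - 1) ∈
          aug N * aug N := fun b =>
        Submodule.mul_mem_mul (il_sub_mem _ (N.zpow_mem hn b)) (il_sub_mem _ hn)
      induction a using Int.induction_on with
      | zero => rw [zpow_zero, map_one]; simp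
      | succ i ih =>
        rw [step, add_smul, one_smul]
        have := sub_mem ih (mem i)
        convert this using 1
        abel
      | pred i ih =>
        have s := step (-(i : ℤ) - 1)
        have m := mem (-(i : ℤ) - 1)
        rw [sub_add_cancel] at s
        rw [s] at ih
        rw [sub_smul, one_smul]
        have := add_mem ih m
        convert this using 1
        abel
    refine ⟨n ^ a, N.zpow_mem hn a, ?_⟩
    have := add_mem (Submodule.smul_mem _ a h1) (key a)
    convert this using 1
    rw [smul_sub]; abel

/-- The Fox-derivative type functional attached to one free generator. -/
theorem il_fox (R : Subgroup F) [IsFreeGroup R] (i : IsFreeGroup.Generators R) :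
    ∃ D : MonoidAlgebra ℤ F →ₗ[ℤ] MonoidAlgebra ℤ F,
      (∀ c, D ((MonoidAlgebra.of ℤ F (IsFreeGroup.of i : R) - 1) * c) = c) ∧
      ∀ j, j ≠ i → ∀ c, D ((MonoidAlgebra.of ℤ F (IsFreeGroup.of j : R) - 1) * c) = 0 := by
  classical
  let δ : IsFreeGroup.Generators R → MonoidAlgebra ℤ F := fun j => if j = i then 1 else 0
  let P : R → Equiv.Perm (MonoidAlgebra ℤ F) := fun u =>
    { toFun := fun a => a * MonoidAlgebra.of ℤ F (u : F)⁻¹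
      invFun := fun a => a * MonoidAlgebra.of ℤ F (u : F)
      left_inv := fun a => by
        dsimp only
        rw [mul_assoc, ← map_mul]
        simp [← MonoidAlgebra.one_def]
      right_inv := fun a => by
        dsimp only
        rw [mul_assoc, ← map_mul]
        simp [← MonoidAlgebra.one_def] }
  let φ : R →* Equiv.Perm (MonoidAlgebra ℤ F) :=
    IsFreeGroup.lift fun j => P (IsFreeGroup.of j) * Equiv.addRight (δ j)
  have hφ : ∀ j a, φ (IsFreeGroup.of j) a =
      (a + δ j) * MonoidAlgebra.of ℤ F ((IsFreeGroup.of j : R) : F)⁻¹ := by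
    intro j a
    simp only [φ, IsFreeGroup.lift_of]
    rfl
  have hu : ∃ u : F → R, ∀ (r : R) (f : F), u (r * f) = r * u f := by
    let q : F → Quotient (QuotientGroup.rightRel R) := fun f => Quotient.mk'' f
    have hq : ∀ f, f * (q f).out⁻¹ ∈ R := fun f => by
      have : (QuotientGroup.rightRel R) (q f).out f := Quotient.mk_out f
      rwa [QuotientGroup.rightRel_apply] at this
    refine ⟨fun f => ⟨f * (q f).out⁻¹, hq f⟩, fun r f => ?_⟩
    have e : q (r * f) = q f := by
      refine Quotient.sound' ?_
      rw [QuotientGroup.rightRel_apply]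
      simp
    ext
    simp [e, mul_assoc]
  obtain ⟨u, hu⟩ := hu
  obtain ⟨D, hD⟩ := il_exists_lin (fun f : F => φ (u f) 0 * MonoidAlgebra.of ℤ F f)
  have main : ∀ j c, D ((MonoidAlgebra.of ℤ F (IsFreeGroup.of j : R) - 1) * c) = δ j * c := by
    intro j c
    have : ilGr (⊤ : Subgroup F) ≤ LinearMap.eqLocus
        (D ∘ₗ LinearMap.mulLeft ℤ (MonoidAlgebra.of ℤ F (IsFreeGroup.of j : R) - 1))
        (LinearMap.mulLeft ℤ (δ j)) := by
      refine il_gr_le _ _ fun f _ => ?_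
      simp only [LinearMap.mem_eqLocus, LinearMap.comp_apply, LinearMap.mulLeft_apply]
      rw [sub_mul, one_mul, ← map_mul, map_sub, hD, hD, hu, map_mul φ, Equiv.Perm.mul_apply, hφ,
        mul_assoc, ← map_mul]
      simp [add_mul]
    rw [il_gr_top] at this
    exact this (x := c) trivial
  refine ⟨D, fun c => ?_, fun j hj c => ?_⟩
  · rw [main]; simp [δ]
  · rw [main]; simp [δ, hj]

theorem il_closure (G : Type) [Group G] [IsFreeGroup G] (K : Subgroup G)
    (h : ∀ i, (IsFreeGroup.of i : G) ∈ K) : K = ⊤ := by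
  let φ : G →* K := IsFreeGroup.lift fun i => ⟨IsFreeGroup.of i, h i⟩
  have : K.subtype.comp φ = MonoidHom.id G := by
    refine IsFreeGroup.ext_hom fun a => ?_
    simp [φ]
  refine eq_top_iff.2 fun g _ => ?_
  have e := DFunLike.congr_fun this g
  simp only [MonoidHom.comp_apply, MonoidHom.id_apply] at e
  rw [← e]
  exact (φ g).2

/-- freeness of `Δ(R)`: intersections can be computed coordinatewise -/
theorem il_inter (R : Subgroup F) [IsFreeGroup R] (A B : Submodule ℤ (MonoidAlgebra ℤ F))
    (hA : ∀ r ∈ R, ∀ a ∈ A, MonoidAlgebra.of ℤ F r * a ∈ A)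
    (hB : ∀ r ∈ R, ∀ a ∈ B, MonoidAlgebra.of ℤ F r * a ∈ B) :
    (aug R * A) ⊓ (aug R * B) ≤ aug R * (A ⊓ B) := by
  classical
  let L : (IsFreeGroup.Generators R →₀ MonoidAlgebra ℤ F) →ₗ[ℤ] MonoidAlgebra ℤ F :=
    Finsupp.lsum ℤ (fun i => LinearMap.mulLeft ℤ (MonoidAlgebra.of ℤ F (IsFreeGroup.of i : R) - 1))
  have hLs : ∀ i c, L (Finsupp.single i c) =
      (MonoidAlgebra.of ℤ F (IsFreeGroup.of i : R) - 1) * c := by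
    intro i c; simp [L]
  have key : ∀ A : Submodule ℤ (MonoidAlgebra ℤ F),
      (∀ r ∈ R, ∀ a ∈ A, MonoidAlgebra.of ℤ F r * a ∈ A) →
      aug R * A ≤ (Finsupp.submodule fun _ => A).map L := by
    intro A hA
    set V := (Finsupp.submodule fun _ : IsFreeGroup.Generators R => A).map L with hV
    let K : Subgroup R :=
      { carrier := {u | ∀ a ∈ A, (MonoidAlgebra.of ℤ F (u : F) - 1) * a ∈ V}
        one_mem' := fun a _ => by rw [Subgroup.coe_one, map_one]; simp
        mul_mem' := by
          intro u v hu hv a ha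
          have := add_mem (hu _ (hA v v.2 a ha)) (hv a ha)
          convert this using 1
          rw [Subgroup.coe_mul, map_mul]; noncomm_ring
        inv_mem' := by
          intro u hu a ha
          have := neg_mem (hu _ (hA (u : F)⁻¹ (R.inv_mem u.2) a ha))
          convert this using 1
          rw [Subgroup.coe_inv, sub_mul, sub_mul, ← mul_assoc, ← map_mul, mul_inv_cancel, map_one]
          noncomm_ring }
    have hK : K = ⊤ := il_closure R K fun i a ha => by
      rw [← hLs]
      refine Submodule.mem_map_of_mem ?_
      rw [Finsupp.mem_submodule_iff]
      intro j
      rw [Finsupp.single_apply]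
      split_ifs
      · exact ha
      · exact zero_mem _
    refine il_aug_mul_le _ _ _ fun n hn a ha => ?_
    have : (⟨n, hn⟩ : R) ∈ K := hK ▸ trivial
    exact this a ha
  have inj : Function.Injective L := by
    intro c d hcd
    ext1 i
    obtain ⟨D, h1, h2⟩ := il_fox R i
    have : ∀ c, D (L c) = c i := by
      intro c
      induction c using Finsupp.induction_linear with
      | zero => simp
      | add f g hf hg => simp [hf, hg]
      | single j b =>
        rw [hLs]
        by_cases hj : j = i
        · subst hj; rw [h1, Finsupp.single_eq_same]
        · rw [h2 j hj, Finsupp.single_apply, if_neg hj]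
    rw [← this, hcd, this]
  rintro z ⟨hzA, hzB⟩
  obtain ⟨c, hc, rfl⟩ := key A hA hzA
  obtain ⟨d, hd, hcd⟩ := key B hB hzB
  obtain rfl := inj hcd
  rw [SetLike.mem_coe, Finsupp.mem_submodule_iff] at hc hd
  simp only [L, Finsupp.lsum_apply]
  refine Submodule.sum_mem _ fun i _ => ?_
  exact Submodule.mul_mem_mul (il_sub_mem _ (IsFreeGroup.of i : R).2) ⟨hc i, hd i⟩

/-- `ℤ[S] ∩ ℤ[F]Δ(T) ⊆ ℤ[S]Δ(S∩T)` -/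
theorem il_gr_inter (S T : Subgroup F) : ilGr S ⊓ (⊤ * aug T) ≤ ilGr S * aug (S ⊓ T) := by
  classical
  let q : F → F ⧸ T := fun f => (f : F ⧸ T)
  let g : F ⧸ T → MonoidAlgebra ℤ F := fun c =>
    if h : ∃ s ∈ S, q s = c then MonoidAlgebra.of ℤ F h.choose else 0
  obtain ⟨L, hL⟩ := il_exists_lin (fun f => g (q f))
  have h1 : (⊤ * aug T : Submodule ℤ (MonoidAlgebra ℤ F)) ≤ LinearMap.ker L := by
    rw [← il_gr_top]
    refine il_gr_mul_le _ _ _ fun f _ a ha => ?_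
    have : aug T ≤ (LinearMap.ker L).comap (LinearMap.mulLeft ℤ (MonoidAlgebra.of ℤ F f)) := by
      refine il_aug_le _ _ fun t ht => ?_
      simp only [Submodule.mem_comap, LinearMap.mulLeft_apply, LinearMap.mem_ker]
      rw [mul_sub, mul_one, ← map_mul, map_sub, hL, hL]
      have : q (f * t) = q f := QuotientGroup.mk_mul_of_mem f ht
      rw [this, sub_self]
    exact this ha
  have h2 : ilGr S ≤ (ilGr S * aug (S ⊓ T)).comap (LinearMap.id - L) := by
    refine il_gr_le _ _ fun s hs => ?_
    simp only [Submodule.mem_comap, LinearMap.sub_apply, LinearMap.id_apply, hL]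
    have h : ∃ s' ∈ S, q s' = q s := ⟨s, hs, rfl⟩
    simp only [g, dif_pos h]
    obtain ⟨ha, hb⟩ := h.choose_spec
    generalize h.choose = r at ha hb
    have hm : r⁻¹ * s ∈ S ⊓ T := ⟨S.mul_mem (S.inv_mem ha) hs, QuotientGroup.eq.1 hb⟩
    have := Submodule.mul_mem_mul (il_of_mem S ha) (il_sub_mem _ hm)
    rw [mul_sub, ← map_mul, mul_one, mul_inv_cancel_left] at this
    exact this
  rintro x ⟨hx, hx'⟩
  have h3 := h2 hx
  have h4 := h1 hx'
  simpa [LinearMap.mem_ker.1 h4] using h3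

/-- an element of M whose difference with 1 lies in Δ(F)Δ(M) is in the derived subgroup -/
theorem il_derived (M : Subgroup F) {m : F} (hm : m ∈ M)
    (h : MonoidAlgebra.of ℤ F m - 1 ∈ aug (⊤ : Subgroup F) * aug M) : m ∈ ⁅M, M⁆ := by
  have hq : ∀ f : F, ((f : F ⧸ M).out)⁻¹ * f ∈ M := fun f => by
    have := QuotientGroup.out_eq' (f : F ⧸ M)
    exact QuotientGroup.eq.1 this
  let θ : F → Additive (Abelianization M) := fun f =>
    Additive.ofMul (Abelianization.of ⟨((f : F ⧸ M).out)⁻¹ * f, hq f⟩)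
  have hθ : ∀ f : F, ∀ m : M, θ (f * m) = θ f + Additive.ofMul (Abelianization.of m) := by
    intro f m
    have e : ((f * (m : F) : F) : F ⧸ M) = f := QuotientGroup.mk_mul_of_mem f m.2
    simp only [θ]
    rw [← ofMul_mul, ← map_mul]
    congr 2
    ext
    simp [e, mul_assoc]
  obtain ⟨L, hL⟩ := il_exists_lin θ
  have h1 : aug (⊤ : Subgroup F) * aug M ≤ LinearMap.ker L := by
    refine il_aug_mul_le _ _ _ fun f _ a ha => ?_
    have : aug M ≤ (LinearMap.ker L).comap
        (LinearMap.mulLeft ℤ (MonoidAlgebra.of ℤ F f - 1)) := by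
      refine il_aug_le _ _ fun n hn => ?_
      simp only [Submodule.mem_comap, LinearMap.mulLeft_apply, LinearMap.mem_ker]
      have e : (MonoidAlgebra.of ℤ F f - 1) * (MonoidAlgebra.of ℤ F n - 1) =
        MonoidAlgebra.of ℤ F (f * n) - MonoidAlgebra.of ℤ F f -
          (MonoidAlgebra.of ℤ F (1 * n) - MonoidAlgebra.of ℤ F 1) := by
        rw [one_mul, map_mul, map_one]; noncomm_ring
      rw [e]
      simp only [map_sub, hL]
      have a1 := hθ f ⟨n, hn⟩
      have a2 := hθ 1 ⟨n, hn⟩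
      simp only at a1 a2
      rw [a1, a2]
      abel
    exact this ha
  have h2 := LinearMap.mem_ker.1 (h1 h)
  rw [← map_one (MonoidAlgebra.of ℤ F), map_sub, hL, hL] at h2
  have a2 := hθ 1 ⟨m, hm⟩
  simp only [one_mul] at a2
  rw [a2, add_sub_cancel_left] at h2
  have h3 : Abelianization.of (⟨m, hm⟩ : M) = 1 := h2
  have h4 : (⟨m, hm⟩ : M) ∈ commutator M := by
    rw [← Abelianization.ker_of]; exact h3
  have h5 := Subgroup.mem_map_of_mem M.subtype h4
  rw [Subgroup.map_subtype_commutator] at h5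
  exact h5

/-- the augmentation ideal of the derived subgroup of S ∩ T lies in Δ(S)Δ(T) -/
theorem il_aug_comm (S T : Subgroup F) : aug ⁅S ⊓ T, S ⊓ T⁆ ≤ aug S * aug T := by
  have hS : ∀ s ∈ S, ∀ x ∈ aug S * aug T, MonoidAlgebra.of ℤ F s * x ∈ aug S * aug T := by
    intro s hs x hx
    have hl : ilGr S * aug S ≤ aug S := by
      refine il_gr_mul_le _ _ _ fun n hn a ha => ?_
      have := add_mem (il_aug_mul_aug S (Submodule.mul_mem_mul (il_sub_mem S hn) ha)) ha
      convert this using 1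
      noncomm_ring
    have := Submodule.mul_mem_mul (il_of_mem S hs) hx
    rw [← mul_assoc] at this
    exact il_mul_le_mul hl le_rfl this
  let K : Subgroup F :=
    { carrier := {u | u ∈ S ∧ MonoidAlgebra.of ℤ F u - 1 ∈ aug S * aug T}
      one_mem' := ⟨S.one_mem, by rw [map_one]; simp⟩
      mul_mem' := by
        rintro u v ⟨hu, hu'⟩ ⟨hv, hv'⟩
        refine ⟨S.mul_mem hu hv, ?_⟩
        have := add_mem (hS u hu _ hv') hu'
        convert this using 1
        rw [map_mul]; noncomm_ring
      inv_mem' := by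
        rintro u ⟨hu, hu'⟩
        refine ⟨S.inv_mem hu, ?_⟩
        have := neg_mem (hS _ (S.inv_mem hu) _ hu')
        convert this using 1
        rw [mul_sub, ← map_mul, inv_mul_cancel, map_one, mul_one, neg_sub] }
  have hK : ⁅S ⊓ T, S ⊓ T⁆ ≤ K := by
    refine Subgroup.commutator_le.2 ?_
    intro a ha b hb
    refine ⟨S.mul_mem (S.mul_mem (S.mul_mem ha.1 hb.1) (S.inv_mem ha.1)) (S.inv_mem hb.1), ?_⟩
    have hx := sub_mem (Submodule.mul_mem_mul (il_sub_mem S ha.1) (il_sub_mem T hb.2))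
      (Submodule.mul_mem_mul (il_sub_mem S hb.1) (il_sub_mem T ha.2))
    have ht : a⁻¹ * b⁻¹ ∈ T := T.mul_mem (T.inv_mem ha.2) (T.inv_mem hb.2)
    have := Submodule.mul_mem_mul hx (il_of_mem T ht)
    rw [mul_assoc (aug S)] at this
    have := il_mul_le_mul le_rfl (il_aug_mul_gr T) this
    convert this using 1
    have e : (MonoidAlgebra.of ℤ F a - 1) * (MonoidAlgebra.of ℤ F b - 1) -
        (MonoidAlgebra.of ℤ F b - 1) * (MonoidAlgebra.of ℤ F a - 1) =
        MonoidAlgebra.of ℤ F (a * b) - MonoidAlgebra.of ℤ F (b * a) := by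
      rw [map_mul, map_mul]; noncomm_ring
    rw [e, sub_mul, ← map_mul, ← map_mul, commutatorElement_def,
      show b * a * (a⁻¹ * b⁻¹) = 1 by group, map_one, ← mul_assoc]
  exact il_aug_le _ _ fun n hn => (hK hn).2

end helpers

/-- Lemma 2.2: for normal subgroups `R ⊆ T`, `S` of a free group `F`,
`Δ(R)Δ(S)Δ(T) ∩ Δ(R)Δ(R∩S) = Δ(R)Δ(R∩S)Δ(R) + Δ(R)Δ(R ∩ (S∩T)')`. -/
theorem intersection_lemma (F : Type) [Group F] [IsFreeGroup F]
    (R S T : Subgroup F) [R.Normal] [S.Normal] [T.Normal] (hRT : R ≤ T) :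
    (aug R * aug S * aug T) ⊓ (aug R * aug (R ⊓ S)) =
      aug R * aug (R ⊓ S) * aug R + aug R * aug (R ⊓ ⁅S ⊓ T, S ⊓ T⁆) := by
  have hM : ∀ n ∈ R ⊓ S, MonoidAlgebra.of ℤ F n - 1 ∈ aug S * (⊤ * aug T) →
      n ∈ ⁅S ⊓ T, S ⊓ T⁆ := by
    intro n hn h
    have h1 : MonoidAlgebra.of ℤ F n - 1 ∈ aug S * ilGr S := by
      have := Submodule.mul_mem_mul (il_sub_mem S hn.2) (il_of_mem S S.one_mem)
      rwa [map_one, mul_one] at this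
    have h2 := il_inter S (ilGr S) (⊤ * aug T)
      (fun r hr a ha => il_gr_mul_gr S (Submodule.mul_mem_mul (il_of_mem S hr) ha))
      (fun r _ a ha => by
        have := Submodule.mul_mem_mul
          (show MonoidAlgebra.of ℤ F r ∈ (⊤ : Submodule ℤ (MonoidAlgebra ℤ F)) from trivial) ha
        rw [← mul_assoc] at this
        exact il_mul_le_mul le_top le_rfl this) ⟨h1, h⟩
    have h3 := il_mul_le_mul le_rfl (il_gr_inter S T) h2
    rw [← mul_assoc] at h3
    refine il_derived (S ⊓ T) ⟨hn.2, hRT hn.1⟩ ?_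
    exact il_mul_le_mul ((il_aug_mul_gr S).trans (il_aug_mono le_top)) le_rfl h3
  have hNR : aug (R ⊓ S) * aug R ≤ aug S * aug T :=
    il_mul_le_mul (il_aug_mono inf_le_right) (il_aug_mono hRT)
  -- conjugation `ℤ[F]Δ(S) = Δ(S)ℤ[F]`
  have hconj : (⊤ : Submodule ℤ (MonoidAlgebra ℤ F)) * aug S ≤ aug S * ⊤ := by
    rw [← il_gr_top]
    refine il_mul_aug_le _ _ _ fun s hs a ha => ?_
    have : ilGr (⊤ : Subgroup F) ≤ (aug S * ilGr (⊤ : Subgroup F)).comap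
        (LinearMap.mulRight ℤ (MonoidAlgebra.of ℤ F s - 1)) := by
      refine il_gr_le _ _ fun f hf => ?_
      have := Submodule.mul_mem_mul (il_sub_mem S (‹S.Normal›.conj_mem s hs f)) (il_of_mem ⊤ hf)
      simp only [Submodule.mem_comap, LinearMap.mulRight_apply]
      convert this using 1
      rw [sub_mul, ← map_mul, mul_sub, ← map_mul]
      simp
    exact this ha
  have hB : ilGr R * aug (R ⊓ S) ≤ aug (R ⊓ S) * aug R + aug (R ⊓ S) := by
    refine il_mul_aug_le _ _ _ fun s hs a ha => ?_
    have : ilGr R ≤ (aug (R ⊓ S) * aug R + aug (R ⊓ S)).comap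
        (LinearMap.mulRight ℤ (MonoidAlgebra.of ℤ F s - 1)) := by
      refine il_gr_le _ _ fun f hf => ?_
      have hc : f * s * f⁻¹ ∈ R ⊓ S :=
        ⟨‹R.Normal›.conj_mem s hs.1 f, ‹S.Normal›.conj_mem s hs.2 f⟩
      have := il_add_mem (Submodule.mul_mem_mul (il_sub_mem _ hc) (il_sub_mem R hf))
        (il_sub_mem _ hc)
      simp only [Submodule.mem_comap, LinearMap.mulRight_apply]
      convert this using 1
      rw [mul_sub _ (MonoidAlgebra.of ℤ F f), mul_one, sub_add_cancel, sub_mul, ← map_mul, mul_sub, ← map_mul]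
      simp
    exact this ha
  have hB' : aug (R ⊓ S) * aug R ≤ ilGr R * aug (R ⊓ S) := by
    refine il_aug_mul_le _ _ _ fun s hs a ha => ?_
    have : aug R ≤ (ilGr R * aug (R ⊓ S)).comap
        (LinearMap.mulLeft ℤ (MonoidAlgebra.of ℤ F s - 1)) := by
      refine il_aug_le _ _ fun f hf => ?_
      have hc : f⁻¹ * s * f ∈ R ⊓ S := by
        have h1 := ‹R.Normal›.conj_mem s hs.1 f⁻¹
        have h2 := ‹S.Normal›.conj_mem s hs.2 f⁻¹
        rw [inv_inv] at h1 h2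
        exact ⟨h1, h2⟩
      have := sub_mem (Submodule.mul_mem_mul (il_of_mem R hf) (il_sub_mem _ hc))
        (Submodule.mul_mem_mul (il_of_mem R R.one_mem) (il_sub_mem _ hs))
      simp only [Submodule.mem_comap, LinearMap.mulLeft_apply]
      convert this using 1
      rw [mul_sub, mul_sub, ← map_mul, map_one, mul_assoc, mul_inv_cancel_left, map_mul]
      noncomm_ring
    exact this ha
  apply le_antisymm
  · have step : (⊤ * (aug S * aug T)) ⊓ (ilGr R * aug (R ⊓ S)) ≤
        aug (R ⊓ S) * aug R + aug (R ⊓ ⁅S ⊓ T, S ⊓ T⁆) := by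
      rintro b ⟨hbA, hbB⟩
      obtain ⟨y, hy, z, hz, rfl⟩ := Submodule.mem_sup.1 (hB hbB)
      obtain ⟨n, hn, hzn⟩ := il_aug_mod _ hz
      have hzn' : z - (MonoidAlgebra.of ℤ F n - 1) ∈ aug (R ⊓ S) * aug R :=
        il_mul_le_mul le_rfl (il_aug_mono inf_le_left) hzn
      have hw := add_mem hy hzn'
      have hwA : y + (z - (MonoidAlgebra.of ℤ F n - 1)) ∈ ⊤ * (aug S * aug T) := by
        have := Submodule.mul_mem_mul
          (show (1 : MonoidAlgebra ℤ F) ∈ (⊤ : Submodule ℤ (MonoidAlgebra ℤ F)) from trivial)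
          (hNR hw)
        rwa [one_mul] at this
      have hnA := sub_mem hbA hwA
      have e : y + z - (y + (z - (MonoidAlgebra.of ℤ F n - 1))) =
        MonoidAlgebra.of ℤ F n - 1 := by abel
      rw [e, ← mul_assoc] at hnA
      have hnA' := il_mul_le_mul hconj le_rfl hnA
      rw [mul_assoc] at hnA'
      have hn' := hM n hn hnA'
      have := il_add_mem hw (il_sub_mem (R ⊓ ⁅S ⊓ T, S ⊓ T⁆) ⟨hn.1, hn'⟩)
      convert this using 1
      abel
    rintro x ⟨hx1, hx2⟩
    have hA1 : x ∈ aug R * (⊤ * (aug S * aug T)) := by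
      rw [SetLike.mem_coe, mul_assoc] at hx1
      refine il_mul_le_mul le_rfl ?_ hx1
      intro w hw
      have := Submodule.mul_mem_mul
        (show (1 : MonoidAlgebra ℤ F) ∈ (⊤ : Submodule ℤ (MonoidAlgebra ℤ F)) from trivial) hw
      rwa [one_mul] at this
    have hA2 : x ∈ aug R * (ilGr R * aug (R ⊓ S)) := by
      refine il_mul_le_mul le_rfl ?_ hx2
      intro w hw
      have := Submodule.mul_mem_mul (il_of_mem R R.one_mem) hw
      rwa [map_one, one_mul] at this
    have h := il_inter R _ _
      (fun r _ a ha => by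
        have := Submodule.mul_mem_mul
          (show MonoidAlgebra.of ℤ F r ∈ (⊤ : Submodule ℤ (MonoidAlgebra ℤ F)) from trivial) ha
        rw [← mul_assoc] at this
        exact il_mul_le_mul le_top le_rfl this)
      (fun r hr a ha => by
        have := Submodule.mul_mem_mul (il_of_mem R hr) ha
        rw [← mul_assoc] at this
        exact il_mul_le_mul (il_gr_mul_gr R) le_rfl this) ⟨hA1, hA2⟩
    have h' := il_mul_le_mul le_rfl step h
    rwa [mul_add, ← mul_assoc] at h'
  · refine sup_le (le_inf ?_ ?_) (le_inf ?_ ?_)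
    · rw [mul_assoc, mul_assoc]
      exact il_mul_le_mul le_rfl hNR
    · rw [mul_assoc]
      refine (il_mul_le_mul le_rfl hB').trans ?_
      rw [← mul_assoc]
      exact il_mul_le_mul (il_aug_mul_gr R) le_rfl
    · rw [mul_assoc]
      exact il_mul_le_mul le_rfl ((il_aug_mono inf_le_right).trans (il_aug_comm S T))
    · refine il_mul_le_mul le_rfl (il_aug_mono (le_inf inf_le_left ?_))
      refine inf_le_right.trans (Subgroup.commutator_le.2 fun a ha b hb => ?_)
      exact S.mul_mem (S.mul_mem (S.mul_mem ha.1 hb.1) (S.inv_mem ha.1)) (S.inv_mem hb.1)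
end

section
/- Let F be a free group and R, S normal subgroups of F with R ⊆ S. Then, inside ℤ[F], Δ(R)Δ(F)Δ(S)Δ(R) ∩ Δ(R)³ = Δ(R)⁴ + Δ(R)Δ(R ∩ S')Δ(R), where S' is the derived subgroup of S. -/
open MonoidAlgebra in
theorem zf_lin_ext {F M : Type} [Group F] [AddCommGroup M]
    {L L' : MonoidAlgebra ℤ F →ₗ[ℤ] M} (h : ∀ f, L (of ℤ F f) = L' (of ℤ F f)) : L = L' := by
  refine (MonoidAlgebra.basis F ℤ).ext fun f => ?_
  simpa using h f

open MonoidAlgebra in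
theorem zf_exists_lin {F M : Type} [Group F] [AddCommGroup M] (φ : F → M) :
    ∃ L : MonoidAlgebra ℤ F →ₗ[ℤ] M, ∀ f, L (of ℤ F f) = φ f := by
  refine ⟨(MonoidAlgebra.basis F ℤ).constr ℤ φ, fun f => ?_⟩
  have := (MonoidAlgebra.basis F ℤ).constr_basis ℤ φ f
  simpa using this

theorem perm_aux {α : Type} (e : Equiv.Perm α) (x : α) : e (e⁻¹ x) = x :=
  e.apply_symm_apply x

/-- a Fox crossed homomorphism on a free group with prescribed values -/
theorem fox_crossed {F Y : Type} [Group F] (ι : FreeGroup Y →* F)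
    (c : Y → MonoidAlgebra ℤ F) :
    ∃ d : FreeGroup Y → MonoidAlgebra ℤ F,
      (∀ v w, d (v * w) = d v + MonoidAlgebra.of ℤ F (ι v) * d w) ∧
      ∀ y, d (FreeGroup.of y) = c y := by
  let u : Y → Equiv.Perm (MonoidAlgebra ℤ F) := fun y =>
    { toFun := fun x => MonoidAlgebra.of ℤ F (ι (FreeGroup.of y)) * x + c y
      invFun := fun x => MonoidAlgebra.of ℤ F (ι (FreeGroup.of y))⁻¹ * (x - c y)
      left_inv := fun x => by
        simp only [add_sub_cancel_right, ← mul_assoc, ← map_mul, inv_mul_cancel, map_one, one_mul]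
      right_inv := fun x => by
        simp only [← mul_assoc, ← map_mul, mul_inv_cancel, map_one, one_mul, sub_add_cancel] }
  let Φ := FreeGroup.lift u
  have hof : ∀ y x, Φ (FreeGroup.of y) x = MonoidAlgebra.of ℤ F (ι (FreeGroup.of y)) * x + c y := by
    intro y x
    simp only [Φ, FreeGroup.lift_apply_of]
    rfl
  have haff : ∀ w x, Φ w x = MonoidAlgebra.of ℤ F (ι w) * x + Φ w 0 := by
    intro w
    induction w using FreeGroup.induction_on with
    | C1 => intro x; simp only [map_one, one_mul, Equiv.Perm.one_apply, add_zero]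
    | of y => intro x; rw [hof, hof, mul_zero, zero_add]
    | inv_of y ih =>
      intro x
      apply (Φ (FreeGroup.of y)).injective
      rw [map_inv, perm_aux, ih, mul_add, ← mul_assoc, ← map_mul, ← map_mul,
        mul_inv_cancel, map_one, map_one, one_mul, add_assoc, ← ih, perm_aux,
        add_zero]
    | mul v w hv hw =>
      intro x
      rw [map_mul, Equiv.Perm.mul_apply, Equiv.Perm.mul_apply, hw, hv, hv (Φ w 0), map_mul, map_mul,
        mul_add, mul_assoc, add_assoc]
  refine ⟨fun w => Φ w 0, fun v w => ?_, fun y => ?_⟩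
  · show Φ (v * w) 0 = _
    rw [map_mul, Equiv.Perm.mul_apply, haff v (Φ w 0), add_comm]
  · show Φ (FreeGroup.of y) 0 = _
    rw [hof, mul_zero, zero_add]

theorem fox_deriv {F Y : Type} [Group F] (ι : FreeGroup Y →* F) (hι : Function.Injective ι)
    (c : Y → MonoidAlgebra ℤ F) :
    ∃ D : MonoidAlgebra ℤ F →ₗ[ℤ] MonoidAlgebra ℤ F, ∀ y a,
      D (a * (MonoidAlgebra.of ℤ F (ι (FreeGroup.of y)) - 1)) = a * c y := by
  obtain ⟨d, hd, hdc⟩ := fox_crossed ι c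
  let out : F → F := fun f => Quotient.out (QuotientGroup.mk (s := ι.range) f)
  have hw : ∀ f, ∃ w, ι w = (out f)⁻¹ * f := by
    intro f
    have : (out f)⁻¹ * f ∈ ι.range := by
      rw [← QuotientGroup.eq]
      exact Quotient.out_eq _
    exact this
  choose w hw using hw
  have hout : ∀ f v, out (f * ι v) = out f := by
    intro f v
    have : (QuotientGroup.mk (s := ι.range) (f * ι v)) = QuotientGroup.mk f := by
      rw [eq_comm, QuotientGroup.eq]
      exact ⟨v, by group⟩
    simp only [out, this]
  have hwm : ∀ f v, w (f * ι v) = w f * v := by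
    intro f v
    apply hι
    rw [hw, hout, map_mul, hw, mul_assoc]
  obtain ⟨D, hD⟩ := zf_exists_lin (fun f => MonoidAlgebra.of ℤ F (out f) * d (w f))
  refine ⟨D, fun y a => ?_⟩
  have key : D ∘ₗ LinearMap.mulRight ℤ (MonoidAlgebra.of ℤ F (ι (FreeGroup.of y)) - 1) =
      LinearMap.mulRight ℤ (c y) := by
    apply zf_lin_ext
    intro f
    simp only [LinearMap.comp_apply, LinearMap.mulRight_apply]
    rw [mul_sub, mul_one, ← map_mul, map_sub, hD, hD, hout, hwm, hd, hdc, mul_add, add_sub_cancel_left,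
      ← mul_assoc, ← map_mul, hw, mul_inv_cancel_left]
  exact LinearMap.congr_fun key a

/-- flatness: `AΔ(R) ∩ BΔ(R) = (A ∩ B)Δ(R)` -/
theorem flat_right {F : Type} [Group F] [IsFreeGroup F] (R : Subgroup F)
    (A B : Submodule ℤ (MonoidAlgebra ℤ F))
    (hA : ∀ r ∈ R, ∀ a ∈ A, a * MonoidAlgebra.of ℤ F r ∈ A)
    (hB : ∀ r ∈ R, ∀ a ∈ B, a * MonoidAlgebra.of ℤ F r ∈ B) :
    (A * aug R) ⊓ (B * aug R) ≤ (A ⊓ B) * aug R := by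
  classical
  let e := IsFreeGroup.mulEquiv R
  let ι : FreeGroup (IsFreeGroup.Generators R) →* F := R.subtype.comp e.toMonoidHom
  have hι : Function.Injective ι := R.subtype_injective.comp e.injective
  have hιR : ∀ v, ι v ∈ R := fun v => (e v).2
  have hιs : ∀ r ∈ R, ∃ v, ι v = r := fun r hr => by
    obtain ⟨v, hv⟩ := e.surjective ⟨r, hr⟩
    exact ⟨v, by simp only [ι, MonoidHom.comp_apply]; exact congrArg Subtype.val hv⟩
  let E : (IsFreeGroup.Generators R →₀ MonoidAlgebra ℤ F) →ₗ[ℤ] MonoidAlgebra ℤ F :=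
    Finsupp.lsum ℤ fun y =>
      LinearMap.mulRight ℤ (MonoidAlgebra.of ℤ F (ι (FreeGroup.of y)) - 1)
  have hE : ∀ y a, E (Finsupp.single y a) = a * (MonoidAlgebra.of ℤ F (ι (FreeGroup.of y)) - 1) := by
    intro y a
    simp only [E, Finsupp.lsum_single, LinearMap.mulRight_apply]
  have hinj : Function.Injective E := by
    intro α β h
    ext1 y
    obtain ⟨D, hD⟩ := fox_deriv ι hι (Pi.single y 1)
    have : D ∘ₗ E = Finsupp.lapply y := by
      apply Finsupp.lhom_ext
      intro z a
      rw [LinearMap.comp_apply, hE, hD, Finsupp.lapply_apply, Finsupp.single_apply, Pi.single_apply]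
      split_ifs <;> simp
    have h2 := congrArg D h
    have h3 := LinearMap.congr_fun this α
    have h4 := LinearMap.congr_fun this β
    simp only [LinearMap.comp_apply, Finsupp.lapply_apply] at h3 h4
    rw [← h3, ← h4, h]
  have repr : ∀ C : Submodule ℤ (MonoidAlgebra ℤ F),
      (∀ r ∈ R, ∀ a ∈ C, a * MonoidAlgebra.of ℤ F r ∈ C) →
      ∀ x ∈ C * aug R, ∃ α, (∀ y, α y ∈ C) ∧ E α = x := by
    intro C hC x hx
    let T : Submodule ℤ (IsFreeGroup.Generators R →₀ MonoidAlgebra ℤ F) :=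
      { carrier := {α | ∀ y, α y ∈ C}
        zero_mem' := fun y => C.zero_mem
        add_mem' := fun h1 h2 y => C.add_mem (h1 y) (h2 y)
        smul_mem' := fun n α h y => C.smul_mem n (h y) }
    suffices C * aug R ≤ T.map E by
      obtain ⟨α, h1, h2⟩ := this hx
      exact ⟨α, h1, h2⟩
    have hw : ∀ v, ∀ a ∈ C, a * (MonoidAlgebra.of ℤ F (ι v) - 1) ∈ T.map E := by
      intro v
      induction v using FreeGroup.induction_on with
      | C1 => intro a ha; rw [map_one, map_one, sub_self, mul_zero]; exact zero_mem _
      | of y =>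
        intro a ha
        refine ⟨Finsupp.single y a, fun z => ?_, hE y a⟩
        rw [Finsupp.single_apply]
        split_ifs
        · exact ha
        · exact C.zero_mem
      | inv_of y ih =>
        intro a ha
        have := ih _ (hC _ (hιR (FreeGroup.of y)⁻¹) a ha)
        have h2 := neg_mem this
        convert h2 using 1
        rw [mul_sub, mul_sub, mul_assoc, ← map_mul, ← map_mul, inv_mul_cancel, map_one, map_one,
          mul_one, mul_one, neg_sub]
      | mul v w hv hw =>
        intro a ha
        have := add_mem (hw _ (hC _ (hιR v) a ha)) (hv a ha)
        convert this using 1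
        rw [map_mul, map_mul]
        noncomm_ring
    rw [Submodule.mul_le]
    intro a ha b hb
    unfold aug at hb
    induction hb using Submodule.span_induction with
    | mem x hx =>
      obtain ⟨n, hn, rfl⟩ := hx
      obtain ⟨v, rfl⟩ := hιs n hn
      exact hw v a ha
    | zero => rw [mul_zero]; exact zero_mem _
    | add x y _ _ h1 h2 => rw [mul_add]; exact add_mem h1 h2
    | smul n x _ h => rw [mul_smul_comm]; exact Submodule.smul_mem _ n h
  rintro x ⟨hxA, hxB⟩
  obtain ⟨α, hα, hαx⟩ := repr A hA x hxA
  obtain ⟨β, hβ, hβx⟩ := repr B hB x hxB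
  have hab : α = β := hinj (hαx.trans hβx.symm)
  subst hab
  rw [← hαx, ← Finsupp.sum_single α, Finsupp.sum, map_sum]
  refine Submodule.sum_mem _ fun y _ => ?_
  rw [hE]
  exact Submodule.mul_mem_mul ⟨hα y, hβ y⟩ (Submodule.subset_span ⟨_, hιR _, rfl⟩)

theorem zf_exists_inv (F : Type) [Group F] :
    ∃ σ : MonoidAlgebra ℤ F →ₗ[ℤ] MonoidAlgebra ℤ F,
      (∀ f, σ (MonoidAlgebra.of ℤ F f) = MonoidAlgebra.of ℤ F f⁻¹) ∧
      (∀ x, σ (σ x) = x) ∧ (∀ x y, σ (x * y) = σ y * σ x) := by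
  obtain ⟨σ, hσ⟩ := zf_exists_lin (fun f : F => MonoidAlgebra.of ℤ F f⁻¹)
  refine ⟨σ, hσ, fun x => ?_, fun x y => ?_⟩
  · have : σ ∘ₗ σ = LinearMap.id := by
      apply zf_lin_ext
      intro f
      rw [LinearMap.comp_apply, hσ, hσ, inv_inv, LinearMap.id_apply]
    exact LinearMap.congr_fun this x
  · have h1 : ∀ f, σ ∘ₗ LinearMap.mulLeft ℤ (MonoidAlgebra.of ℤ F f) =
        LinearMap.mulRight ℤ (MonoidAlgebra.of ℤ F f⁻¹) ∘ₗ σ := by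
      intro f
      apply zf_lin_ext
      intro g
      simp only [LinearMap.comp_apply, LinearMap.mulLeft_apply, LinearMap.mulRight_apply]
      rw [← map_mul, hσ, hσ, mul_inv_rev, map_mul]
    have h2 : σ ∘ₗ LinearMap.mulRight ℤ y = LinearMap.mulLeft ℤ (σ y) ∘ₗ σ := by
      apply zf_lin_ext
      intro f
      have := LinearMap.congr_fun (h1 f) y
      simp only [LinearMap.comp_apply, LinearMap.mulLeft_apply, LinearMap.mulRight_apply] at this ⊢
      rw [this, hσ]
    exact LinearMap.congr_fun h2 x

theorem flat_left {F : Type} [Group F] [IsFreeGroup F] (R : Subgroup F)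
    (A B : Submodule ℤ (MonoidAlgebra ℤ F))
    (hA : ∀ r ∈ R, ∀ a ∈ A, MonoidAlgebra.of ℤ F r * a ∈ A)
    (hB : ∀ r ∈ R, ∀ a ∈ B, MonoidAlgebra.of ℤ F r * a ∈ B) :
    (aug R * A) ⊓ (aug R * B) ≤ aug R * (A ⊓ B) := by
  obtain ⟨σ, hσ, hσσ, hmul⟩ := zf_exists_inv F
  have hσ1 : σ 1 = 1 := by
    have := hσ 1
    rwa [inv_one, map_one] at this
  have haug : ∀ x ∈ aug R, σ x ∈ aug R := by
    intro x hx
    have : aug R ≤ (aug R).comap σ := by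
      conv_lhs => unfold aug
      rw [Submodule.span_le]
      rintro _ ⟨n, hn, rfl⟩
      show σ _ ∈ aug R
      rw [map_sub, hσ, hσ1]
      exact Submodule.subset_span ⟨_, R.inv_mem hn, rfl⟩
    exact this hx
  have hst : ∀ C : Submodule ℤ (MonoidAlgebra ℤ F),
      (∀ r ∈ R, ∀ a ∈ C, MonoidAlgebra.of ℤ F r * a ∈ C) →
      ∀ r ∈ R, ∀ a ∈ C.comap σ, a * MonoidAlgebra.of ℤ F r ∈ C.comap σ := by
    intro C hC r hr a ha
    show σ _ ∈ C
    rw [hmul, hσ]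
    exact hC _ (R.inv_mem hr) _ ha
  have h1 : ∀ C : Submodule ℤ (MonoidAlgebra ℤ F), ∀ x ∈ aug R * C, σ x ∈ C.comap σ * aug R := by
    intro C x hx
    have : aug R * C ≤ (C.comap σ * aug R).comap σ := by
      rw [Submodule.mul_le]
      intro m hm n hn
      show σ (m * n) ∈ C.comap σ * aug R
      rw [hmul]
      refine Submodule.mul_mem_mul ?_ (haug m hm)
      show σ (σ n) ∈ C
      rwa [hσσ]
    exact this hx
  rintro x ⟨hxA, hxB⟩
  have h2 := flat_right R (A.comap σ) (B.comap σ) (hst A hA) (hst B hB) ⟨h1 A x hxA, h1 B x hxB⟩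
  have h3 : (A.comap σ ⊓ B.comap σ) * aug R ≤ (aug R * (A ⊓ B)).comap σ := by
    rw [Submodule.mul_le]
    intro m hm n hn
    show σ (m * n) ∈ aug R * (A ⊓ B)
    rw [hmul]
    exact Submodule.mul_mem_mul (haug n hn) ⟨hm.1, hm.2⟩
  have h4 : σ (σ x) ∈ aug R * (A ⊓ B) := h3 h2
  rwa [hσσ] at h4

theorem sub_mul_le_mul {F : Type} [Group F] {A B C D : Submodule ℤ (MonoidAlgebra ℤ F)}
    (h : A ≤ C) (h' : B ≤ D) : A * B ≤ C * D :=
  Submodule.mul_le.2 fun _ hm _ hn => Submodule.mul_mem_mul (h hm) (h' hn)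

theorem aug_mono {F : Type} [Group F] {M N : Subgroup F} (h : M ≤ N) : aug M ≤ aug N :=
  Submodule.span_mono fun _ ⟨n, hn, hx⟩ => ⟨n, h hn, hx⟩

theorem mem_aug {F : Type} [Group F] {N : Subgroup F} {n : F} (hn : n ∈ N) :
    MonoidAlgebra.of ℤ F n - 1 ∈ aug N := Submodule.subset_span ⟨n, hn, rfl⟩

/-- elements of `Δ(N)` are `n - 1` modulo `Δ(N)²` -/
theorem aug_mod_sq {F : Type} [Group F] (N : Subgroup F) (x : MonoidAlgebra ℤ F)
    (hx : x ∈ aug N) : ∃ n ∈ N, x - (MonoidAlgebra.of ℤ F n - 1) ∈ aug N * aug N := by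
  have hneg : ∀ x : MonoidAlgebra ℤ F, (∃ n ∈ N, x - (MonoidAlgebra.of ℤ F n - 1) ∈ aug N * aug N) →
      (∃ n ∈ N, -x - (MonoidAlgebra.of ℤ F n - 1) ∈ aug N * aug N) := by
    rintro x ⟨n, hn, h⟩
    refine ⟨n⁻¹, N.inv_mem hn, ?_⟩
    have := add_mem (neg_mem h) (Submodule.mul_mem_mul (mem_aug hn) (mem_aug (N.inv_mem hn)))
    convert this using 1
    rw [mul_sub, sub_mul, ← map_mul, mul_inv_cancel, map_one]
    noncomm_ring
  have hadd : ∀ x y : MonoidAlgebra ℤ F,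
      (∃ n ∈ N, x - (MonoidAlgebra.of ℤ F n - 1) ∈ aug N * aug N) →
      (∃ n ∈ N, y - (MonoidAlgebra.of ℤ F n - 1) ∈ aug N * aug N) →
      (∃ n ∈ N, (x + y) - (MonoidAlgebra.of ℤ F n - 1) ∈ aug N * aug N) := by
    rintro x y ⟨n, hn, h⟩ ⟨m, hm, h'⟩
    refine ⟨n * m, N.mul_mem hn hm, ?_⟩
    have := sub_mem (add_mem h h') (Submodule.mul_mem_mul (mem_aug hn) (mem_aug hm))
    convert this using 1
    rw [map_mul]
    noncomm_ring
  have hzero : (∃ n ∈ N, (0 : MonoidAlgebra ℤ F) - (MonoidAlgebra.of ℤ F n - 1) ∈ aug N * aug N) :=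
    ⟨1, N.one_mem, by rw [map_one, sub_self, sub_self]; exact zero_mem _⟩
  let P : AddSubgroup (MonoidAlgebra ℤ F) :=
    { carrier := {x | ∃ n ∈ N, x - (MonoidAlgebra.of ℤ F n - 1) ∈ aug N * aug N}
      zero_mem' := hzero
      add_mem' := fun h1 h2 => hadd _ _ h1 h2
      neg_mem' := fun h => hneg _ h }
  have : aug N ≤ AddSubgroup.toIntSubmodule P := by
    conv_lhs => unfold aug
    rw [Submodule.span_le]
    rintro _ ⟨n, hn, rfl⟩
    exact ⟨n, hn, by rw [sub_self]; exact zero_mem _⟩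
  exact this hx

/-- the intersection of S with 1 + Δ(F)Δ(S) lies in the derived subgroup of S -/
theorem mem_comm_of_mem {F : Type} [Group F] (S : Subgroup F) (r : F) (hr : r ∈ S)
    (h : MonoidAlgebra.of ℤ F r - 1 ∈ aug (⊤ : Subgroup F) * aug S) : r ∈ ⁅S, S⁆ := by
  let out : F → F := fun f => Quotient.out (QuotientGroup.mk (s := S) f)
  have hc : ∀ f, (out f)⁻¹ * f ∈ S := by
    intro f
    rw [← QuotientGroup.eq]
    exact Quotient.out_eq _
  let c : F → S := fun f => ⟨_, hc f⟩
  have hout : ∀ f (s : S), out (f * s) = out f := by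
    intro f s
    have : (QuotientGroup.mk (s := S) (f * s)) = QuotientGroup.mk f := by
      rw [eq_comm, QuotientGroup.eq]
      simp
    simp only [out, this]
  have hcm : ∀ f (s : S), c (f * s) = c f * s := by
    intro f s
    ext
    simp only [c, hout, Subgroup.coe_mul, mul_assoc]
  obtain ⟨ψ, hψ⟩ := zf_exists_lin (fun f : F => Additive.ofMul (Abelianization.of (c f)))
  have hψm : ∀ f (s : S), ψ (MonoidAlgebra.of ℤ F (f * s)) =
      ψ (MonoidAlgebra.of ℤ F f) + Additive.ofMul (Abelianization.of s) := by
    intro f s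
    rw [hψ, hψ, hcm, map_mul, ofMul_mul]
  have h0 : aug (⊤ : Subgroup F) * aug S ≤ LinearMap.ker ψ := by
    unfold aug
    rw [Submodule.span_mul_span, Submodule.span_le]
    rintro _ ⟨_, ⟨f, -, rfl⟩, _, ⟨s, hs, rfl⟩, rfl⟩
    have e1 : (MonoidAlgebra.of ℤ F f - 1) * (MonoidAlgebra.of ℤ F s - 1) =
      (MonoidAlgebra.of ℤ F (f * s) - MonoidAlgebra.of ℤ F f) -
      (MonoidAlgebra.of ℤ F (1 * s) - MonoidAlgebra.of ℤ F 1) := by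
      rw [map_mul, map_mul, map_one]
      noncomm_ring
    have h1 := hψm f ⟨s, hs⟩
    have h2 := hψm 1 ⟨s, hs⟩
    simp only at h1 h2
    show ψ ((MonoidAlgebra.of ℤ F f - 1) * (MonoidAlgebra.of ℤ F s - 1)) = 0
    rw [e1, map_sub, map_sub, map_sub, h1, h2]
    abel
  have h1 : ψ (MonoidAlgebra.of ℤ F r - 1) = 0 := h0 h
  have h2 := hψm 1 ⟨r, hr⟩
  simp only [one_mul] at h2
  rw [← map_one (MonoidAlgebra.of ℤ F), map_sub, h2, add_sub_cancel_left] at h1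
  have h3 : Abelianization.of (⟨r, hr⟩ : S) = 1 := h1
  rw [← MonoidHom.mem_ker, Abelianization.ker_of] at h3
  have h4 := Subgroup.mem_map_of_mem S.subtype h3
  rw [commutator_def, Subgroup.map_commutator] at h4
  simpa [← MonoidHom.range_eq_map] using h4

theorem J_left {F : Type} [Group F] (S : Subgroup F) : ∀ f, ∀ x ∈ aug (⊤ : Subgroup F) * aug S,
      MonoidAlgebra.of ℤ F f * x ∈ aug (⊤ : Subgroup F) * aug S := by
    intro f x hx
    have : aug (⊤ : Subgroup F) * aug S ≤ (aug (⊤ : Subgroup F) * aug S).comap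
        (LinearMap.mulLeft ℤ (MonoidAlgebra.of ℤ F f)) := by
      conv_lhs => unfold aug
      rw [Submodule.span_mul_span, Submodule.span_le]
      rintro _ ⟨_, ⟨g, -, rfl⟩, _, ⟨s, hs, rfl⟩, rfl⟩
      show MonoidAlgebra.of ℤ F f * ((MonoidAlgebra.of ℤ F g - 1) * (MonoidAlgebra.of ℤ F s - 1)) ∈
        aug (⊤ : Subgroup F) * aug S
      have e : MonoidAlgebra.of ℤ F f * ((MonoidAlgebra.of ℤ F g - 1) * (MonoidAlgebra.of ℤ F s - 1))
        = (MonoidAlgebra.of ℤ F (f * g) - 1) * (MonoidAlgebra.of ℤ F s - 1) -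
          (MonoidAlgebra.of ℤ F f - 1) * (MonoidAlgebra.of ℤ F s - 1) := by
        rw [map_mul]; noncomm_ring
      rw [e]
      exact sub_mem (Submodule.mul_mem_mul (mem_aug trivial) (mem_aug hs))
        (Submodule.mul_mem_mul (mem_aug trivial) (mem_aug hs))
    exact this hx

theorem aug_left {F : Type} [Group F] (S : Subgroup F) : ∀ r ∈ S, ∀ x ∈ aug S,
    MonoidAlgebra.of ℤ F r * x ∈ aug S := by
  intro r hr x hx
  have : aug S ≤ (aug S).comap (LinearMap.mulLeft ℤ (MonoidAlgebra.of ℤ F r)) := by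
    conv_lhs => unfold aug
    rw [Submodule.span_le]
    rintro _ ⟨s, hs, rfl⟩
    show MonoidAlgebra.of ℤ F r * (MonoidAlgebra.of ℤ F s - 1) ∈ aug S
    have := sub_mem (mem_aug (S.mul_mem hr hs)) (mem_aug hr)
    convert this using 1
    rw [map_mul]; noncomm_ring
  exact this hx

theorem aug_right {F : Type} [Group F] (S : Subgroup F) : ∀ r ∈ S, ∀ x ∈ aug S,
    x * MonoidAlgebra.of ℤ F r ∈ aug S := by
  intro r hr x hx
  have : aug S ≤ (aug S).comap (LinearMap.mulRight ℤ (MonoidAlgebra.of ℤ F r)) := by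
    conv_lhs => unfold aug
    rw [Submodule.span_le]
    rintro _ ⟨s, hs, rfl⟩
    show (MonoidAlgebra.of ℤ F s - 1) * MonoidAlgebra.of ℤ F r ∈ aug S
    have := sub_mem (mem_aug (S.mul_mem hs hr)) (mem_aug hr)
    convert this using 1
    rw [map_mul]; noncomm_ring
  exact this hx

theorem mul_stable_left {F : Type} [Group F] (R : Subgroup F)
    (A B : Submodule ℤ (MonoidAlgebra ℤ F))
    (hA : ∀ r ∈ R, ∀ a ∈ A, MonoidAlgebra.of ℤ F r * a ∈ A) :
    ∀ r ∈ R, ∀ a ∈ A * B, MonoidAlgebra.of ℤ F r * a ∈ A * B := by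
  intro r hr x hx
  have : A * B ≤ (A * B).comap (LinearMap.mulLeft ℤ (MonoidAlgebra.of ℤ F r)) := by
    rw [Submodule.mul_le]
    intro m hm n hn
    show MonoidAlgebra.of ℤ F r * (m * n) ∈ A * B
    rw [← mul_assoc]
    exact Submodule.mul_mem_mul (hA r hr m hm) hn
  exact this hx

theorem mul_stable_right {F : Type} [Group F] (R : Subgroup F)
    (A B : Submodule ℤ (MonoidAlgebra ℤ F))
    (hB : ∀ r ∈ R, ∀ a ∈ B, a * MonoidAlgebra.of ℤ F r ∈ B) :
    ∀ r ∈ R, ∀ a ∈ A * B, a * MonoidAlgebra.of ℤ F r ∈ A * B := by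
  intro r hr x hx
  have : A * B ≤ (A * B).comap (LinearMap.mulRight ℤ (MonoidAlgebra.of ℤ F r)) := by
    rw [Submodule.mul_le]
    intro m hm n hn
    show m * n * MonoidAlgebra.of ℤ F r ∈ A * B
    rw [mul_assoc]
    exact Submodule.mul_mem_mul hm (hB r hr n hn)
  exact this hx

theorem comm_sub_one_mem {F : Type} [Group F] (S : Subgroup F) :
    aug ⁅S, S⁆ ≤ aug (⊤ : Subgroup F) * aug S := by
  have hl := J_left S
  have hprod : ∀ a b, a ∈ S → b ∈ S →
      (MonoidAlgebra.of ℤ F a - 1) * (MonoidAlgebra.of ℤ F b - 1) ∈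
        aug (⊤ : Subgroup F) * aug S := fun a b _ hb =>
    Submodule.mul_mem_mul (mem_aug trivial) (mem_aug hb)
  let K : Subgroup F :=
    { carrier := {n | MonoidAlgebra.of ℤ F n - 1 ∈ aug (⊤ : Subgroup F) * aug S}
      one_mem' := by
        show MonoidAlgebra.of ℤ F 1 - 1 ∈ aug (⊤ : Subgroup F) * aug S
        rw [map_one, sub_self]; exact zero_mem _
      mul_mem' := by
        intro a b ha hb
        show MonoidAlgebra.of ℤ F (a * b) - 1 ∈ aug (⊤ : Subgroup F) * aug S
        have := add_mem (hl a _ hb) ha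
        convert this using 1
        rw [map_mul]; noncomm_ring
      inv_mem' := by
        intro a ha
        show MonoidAlgebra.of ℤ F a⁻¹ - 1 ∈ aug (⊤ : Subgroup F) * aug S
        have := neg_mem (hl a⁻¹ _ ha)
        convert this using 1
        rw [mul_sub, ← map_mul, inv_mul_cancel, map_one, mul_one, neg_sub] }
  have hK : ⁅S, S⁆ ≤ K := by
    rw [Subgroup.commutator_le]
    intro a ha b hb
    rw [commutatorElement_def]
    show MonoidAlgebra.of ℤ F (a * b * a⁻¹ * b⁻¹) - 1 ∈ aug (⊤ : Subgroup F) * aug S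
    have h1 := sub_mem (hprod _ _ (S.inv_mem ha) (S.inv_mem hb))
      (hprod _ _ (S.inv_mem hb) (S.inv_mem ha))
    have h3 := hl (a * b) _ h1
    convert h3 using 1
    have e : (MonoidAlgebra.of ℤ F a⁻¹ - 1) * (MonoidAlgebra.of ℤ F b⁻¹ - 1) -
        (MonoidAlgebra.of ℤ F b⁻¹ - 1) * (MonoidAlgebra.of ℤ F a⁻¹ - 1) =
        MonoidAlgebra.of ℤ F a⁻¹ * MonoidAlgebra.of ℤ F b⁻¹ -
        MonoidAlgebra.of ℤ F b⁻¹ * MonoidAlgebra.of ℤ F a⁻¹ := by noncomm_ring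
    rw [e, mul_sub, ← map_mul, ← map_mul, ← map_mul, ← map_mul, ← mul_inv_rev, ← mul_inv_rev,
      mul_inv_cancel, map_one, mul_inv_rev, mul_assoc (a * b)]
  conv_lhs => unfold aug
  rw [Submodule.span_le]
  rintro _ ⟨n, hn, rfl⟩
  exact hK hn

/-- Lemma 2.3: for normal subgroups `R ⊆ S` of a free group `F`,
`Δ(R)Δ(F)Δ(S)Δ(R) ∩ Δ(R)³ = Δ(R)⁴ + Δ(R)Δ(R ∩ S')Δ(R)`. -/
theorem intersection_lemma' (F : Type) [Group F] [IsFreeGroup F]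
    (R S : Subgroup F) [R.Normal] [S.Normal] (hRS : R ≤ S) :
    (aug R * aug (⊤ : Subgroup F) * aug S * aug R) ⊓ (aug R ^ 3) =
      aug R ^ 4 + aug R * aug (R ⊓ ⁅S, S⁆) * aug R := by
  have e1 : aug R * aug (⊤ : Subgroup F) * aug S * aug R =
      aug R * ((aug (⊤ : Subgroup F) * aug S) * aug R) := by
    simp only [mul_assoc]
  have e3 : aug R ^ 3 = aug R * (aug R * aug R) := by
    rw [pow_succ, pow_two, mul_assoc]
  have e4 : aug R ^ 4 = aug R * (aug R * aug R * aug R) := by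
    rw [pow_succ, pow_succ, pow_two]; simp only [mul_assoc]
  have hRJ : aug R * aug R ≤ aug (⊤ : Subgroup F) * aug S :=
    sub_mul_le_mul (aug_mono le_top) (aug_mono hRS)
  rw [e1, e3, e4, mul_assoc (aug R) (aug (R ⊓ ⁅S, S⁆))]
  apply le_antisymm
  · have hJl : ∀ r ∈ R, ∀ a ∈ aug (⊤ : Subgroup F) * aug S,
        MonoidAlgebra.of ℤ F r * a ∈ aug (⊤ : Subgroup F) * aug S := fun r _ => J_left S r
    have hJr : ∀ r ∈ R, ∀ a ∈ aug (⊤ : Subgroup F) * aug S,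
        a * MonoidAlgebra.of ℤ F r ∈ aug (⊤ : Subgroup F) * aug S := fun r hr =>
      mul_stable_right S _ _ (aug_right S) r (hRS hr)
    refine (flat_left R _ _ (mul_stable_left R _ _ hJl)
      (mul_stable_left R _ _ (aug_left R))).trans ?_
    rw [← mul_add, ← add_mul]
    refine sub_mul_le_mul le_rfl ((flat_right R _ _ hJr (aug_right R)).trans ?_)
    refine sub_mul_le_mul ?_ le_rfl
    rintro x ⟨hxJ, hxR⟩
    obtain ⟨n, hn, h⟩ := aug_mod_sq R x hxR
    have h1 : MonoidAlgebra.of ℤ F n - 1 ∈ aug (⊤ : Subgroup F) * aug S := by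
      have := sub_mem hxJ (hRJ h)
      rwa [sub_sub_cancel] at this
    have h2 := mem_comm_of_mem S n (hRS hn) h1
    rw [← sub_add_cancel x (MonoidAlgebra.of ℤ F n - 1)]
    exact Submodule.add_mem_sup h (mem_aug ⟨hn, h2⟩)
  · have hS : aug (R ⊓ ⁅S, S⁆) ≤ aug (⊤ : Subgroup F) * aug S :=
      (aug_mono inf_le_right).trans (comm_sub_one_mem S)
    have hRR : aug R * aug R ≤ aug R := by
      rw [Submodule.mul_le]
      intro m hm n hn
      have : aug R ≤ (aug R).comap (LinearMap.mulRight ℤ n) := by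
        conv_lhs => unfold aug
        rw [Submodule.span_le]
        rintro _ ⟨s, hs, rfl⟩
        show (MonoidAlgebra.of ℤ F s - 1) * n ∈ aug R
        rw [sub_mul, one_mul]
        exact sub_mem (aug_left R s hs n hn) hn
      exact this hm
    rw [← mul_add, ← add_mul]
    refine le_inf ?_ ?_
    · exact sub_mul_le_mul le_rfl (sub_mul_le_mul (sup_le hRJ hS) le_rfl)
    · exact sub_mul_le_mul le_rfl
        (sub_mul_le_mul (sup_le hRR (aug_mono inf_le_left)) le_rfl)
end

section
/- Let F be a free group and R a normal subgroup of F, with 𝐫 and 𝐟 the two-sided ideals of ℤ[F] generated by the augmentation ideals of R and F. If a ∈ D(F, 𝐟𝐫𝐟), then a² ∈ D(F, 𝐫𝐫𝐟 + 𝐟𝐫𝐫). -/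
namespace Stohr

open MonoidAlgebra

section Path

set_option linter.unusedSectionVars false

variable {F : Type} [Group F] [IsFreeGroup F]

theorem gen_ind (P : F → Prop) (h1 : P 1) (hg : ∀ x, P (IsFreeGroup.of x))
    (hm : ∀ a b, P a → P b → P (a * b)) (hi : ∀ a, P a → P a⁻¹) (w : F) : P w := by
  obtain ⟨y, rfl⟩ := (IsFreeGroup.toFreeGroup F).symm.surjective w
  have hof : ∀ x, (IsFreeGroup.toFreeGroup F).symm (FreeGroup.of x) = IsFreeGroup.of x := by
    intro x; rfl
  induction y using FreeGroup.induction_on with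
  | C1 => simpa using h1
  | of x => exact hg x
  | inv_of x h => rw [map_inv]; exact hi _ h
  | mul a b ha hb => rw [map_mul]; exact hm _ _ ha hb

/-- path-additive functions -/
def IsPath {A : Type} [AddCommGroup A] (Φ : F → F → A) : Prop :=
  ∀ w w' v, Φ (w * w') v = Φ w v + Φ w' (v * w)

theorem IsPath.one {A : Type} [AddCommGroup A] {Φ : F → F → A} (h : IsPath Φ) (v : F) :
    Φ 1 v = 0 := by
  have := h 1 1 v
  simpa using this

theorem IsPath.inv {A : Type} [AddCommGroup A] {Φ : F → F → A} (h : IsPath Φ) (w v : F) :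
    Φ w⁻¹ v = - Φ w (v * w⁻¹) := by
  have := h w⁻¹ w v
  rw [inv_mul_cancel, h.one] at this
  exact eq_neg_of_add_eq_zero_left this.symm

theorem IsPath.ext {A : Type} [AddCommGroup A] {Φ Ψ : F → F → A} (h : IsPath Φ) (h' : IsPath Ψ)
    (hg : ∀ x v, Φ (IsFreeGroup.of x) v = Ψ (IsFreeGroup.of x) v) (w v : F) : Φ w v = Ψ w v := by
  revert v
  apply gen_ind (fun w => ∀ v, Φ w v = Ψ w v)
  · intro v; rw [h.one, h'.one]
  · exact hg
  · intro a b ha hb v; rw [h, h', ha, hb]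
  · intro a ha v; rw [h.inv, h'.inv, ha]

theorem exists_path {A : Type} [AddCommGroup A] (θ : F → F → A) :
    ∃ Φ : F → F → A, IsPath Φ ∧ ∀ x v, Φ (IsFreeGroup.of x) v = θ (IsFreeGroup.of x) v := by
  let e : F → Equiv.Perm (F × A) := fun x =>
    { toFun := fun p => (p.1 * x, p.2 + θ x p.1)
      invFun := fun p => (p.1 * x⁻¹, p.2 - θ x (p.1 * x⁻¹))
      left_inv := fun p => by simp
      right_inv := fun p => by simp }
  let L : F →* (Equiv.Perm (F × A))ᵐᵒᵖ :=
    IsFreeGroup.lift (fun x => MulOpposite.op (e (IsFreeGroup.of x)))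
  let l : F → Equiv.Perm (F × A) := fun w => (L w).unop
  have l1 : l 1 = 1 := by simp [l]
  have lg : ∀ x, l (IsFreeGroup.of x) = e (IsFreeGroup.of x) := by
    intro x; simp [l, L]
  have lm : ∀ a b p, l (a * b) p = l b (l a p) := by
    intro a b p; simp [l]
  have key : ∀ w v q, l w (v, q) = (v * w, q + (l w (v, 0)).2) := by
    intro w
    apply gen_ind (fun w => ∀ v q, l w (v, q) = (v * w, q + (l w (v, 0)).2))
    · intro v q; simp [l1]
    · intro x v q; simp [lg, e]
    · intro a b ha hb v q
      rw [lm, lm, ha, hb, ha v 0, hb _ (0 + _)]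
      ext <;> simp [mul_assoc, add_assoc]
    · intro a ha
      have hinv : ∀ v q, l a⁻¹ (v, q) = (v * a⁻¹, q - (l a (v * a⁻¹, 0)).2) := by
        intro v q
        have h2 := ha (v * a⁻¹) (q - (l a (v * a⁻¹, 0)).2)
        have h3 : (v, q) = l a (v * a⁻¹, q - (l a (v * a⁻¹, 0)).2) := by
          rw [h2]; simp
        conv_lhs => rw [h3]
        rw [← lm]; simp [l1]
      intro v q
      rw [hinv, hinv]; ext <;> simp [sub_eq_add_neg]
  refine ⟨fun w v => (l w (v, 0)).2, ?_, ?_⟩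
  · intro a b v
    change (l (a * b) (v, 0)).2 = (l a (v, 0)).2 + (l b (v * a, 0)).2
    rw [lm, key a v 0, key b, zero_add]
  · intro x v
    change (l (IsFreeGroup.of x) (v, 0)).2 = _
    rw [lg]; simp [e]

end Path

section Ring

variable {F : Type} [Group F]

/-- group element in the group ring -/
noncomputable abbrev o (w : F) : MonoidAlgebra ℤ F := MonoidAlgebra.of ℤ F w

theorem o_mul (v w : F) : o (v * w) = o v * o w := map_mul _ _ _
theorem o_one : o (1 : F) = 1 := map_one _

theorem exists_lin {Q : Type} [AddCommGroup Q] (φ : F → Q) :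
    ∃ H : MonoidAlgebra ℤ F →ₗ[ℤ] Q, ∀ w, H (o w) = φ w := by
  refine ⟨(MonoidAlgebra.basis F ℤ).constr ℤ φ, fun w => ?_⟩
  have : o w = MonoidAlgebra.basis F ℤ w := by simp [o]
  rw [this, Module.Basis.constr_basis]

/-- standard involution -/
noncomputable def starHom : MonoidAlgebra ℤ F →ₐ[ℤ] (MonoidAlgebra ℤ F)ᵐᵒᵖ :=
  MonoidAlgebra.lift ℤ (MonoidAlgebra ℤ F)ᵐᵒᵖ F
    { toFun := fun w => MulOpposite.op (o w⁻¹)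
      map_one' := by rw [inv_one, o_one]; rfl
      map_mul' := fun a b => by rw [mul_inv_rev, o_mul]; rfl }

/-- standard involution -/
noncomputable def st (x : MonoidAlgebra ℤ F) : MonoidAlgebra ℤ F := (starHom x).unop

theorem st_mul (x y : MonoidAlgebra ℤ F) : st (x * y) = st y * st x := by simp [st]
theorem st_add (x y : MonoidAlgebra ℤ F) : st (x + y) = st x + st y := by simp [st]
theorem st_sub (x y : MonoidAlgebra ℤ F) : st (x - y) = st x - st y := by simp [st]
theorem st_one : st (1 : MonoidAlgebra ℤ F) = 1 := by simp [st]
theorem st_zero : st (0 : MonoidAlgebra ℤ F) = 0 := by simp [st]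
theorem st_smul (n : ℤ) (x : MonoidAlgebra ℤ F) : st (n • x) = n • st x := by
  simp only [st, map_smul, MulOpposite.unop_smul]
theorem st_o (w : F) : st (o w) = o w⁻¹ := by simp [st, starHom, o]

theorem top_eq_span : (⊤ : Submodule ℤ (MonoidAlgebra ℤ F)) = Submodule.span ℤ (Set.range o) := by
  symm
  rw [eq_top_iff]
  intro x _
  induction x using MonoidAlgebra.induction_on with
  | of w => exact Submodule.subset_span ⟨w, rfl⟩
  | add x y hx hy => exact Submodule.add_mem _ (hx trivial) (hy trivial)
  | smul n x hx => exact Submodule.smul_mem _ n (hx trivial)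

theorem augI_mul_top (N : Subgroup F) : augI N * ⊤ = augI N := by
  unfold augI
  rw [mul_assoc]
  congr 1
  refine le_antisymm le_top ?_
  intro x _
  simpa using Submodule.mul_mem_mul (Submodule.mem_top (x := x)) (Submodule.mem_top (x := 1))

theorem augI_eq_span (N : Subgroup F) [hN : N.Normal] :
    augI N = Submodule.span ℤ {x | ∃ v n, n ∈ N ∧ x = o v * (o n - 1)} := by
  unfold augI aug
  rw [top_eq_span, Submodule.span_mul_span]
  congr 1
  ext x
  simp only [Set.mem_mul, Set.mem_ofPred_eq, Set.mem_range]
  constructor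
  · rintro ⟨_, ⟨n, hn, rfl⟩, _, ⟨v, rfl⟩, rfl⟩
    refine ⟨v, v⁻¹ * n * v, ?_, ?_⟩
    · simpa using hN.conj_mem n hn v⁻¹
    · rw [mul_sub, ← o_mul, sub_mul, ← o_mul]; simp [mul_assoc]
  · rintro ⟨v, n, hn, rfl⟩
    refine ⟨_, ⟨v * n * v⁻¹, hN.conj_mem n hn v, rfl⟩, _, ⟨v, rfl⟩, ?_⟩
    rw [mul_sub, ← o_mul, sub_mul, ← o_mul]; simp [mul_assoc]

theorem mem_left (N : Subgroup F) [hN : N.Normal] {x : MonoidAlgebra ℤ F} (y) (hx : x ∈ augI N) :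
    y * x ∈ augI N := by
  have h : (⊤ : Submodule ℤ (MonoidAlgebra ℤ F)) * augI N ≤ augI N := by
    rw [augI_eq_span, top_eq_span, Submodule.span_mul_span]
    apply Submodule.span_mono
    rintro _ ⟨_, ⟨w, rfl⟩, _, ⟨v, n, hn, rfl⟩, rfl⟩
    exact ⟨w * v, n, hn, by rw [o_mul, mul_assoc]⟩
  exact h (Submodule.mul_mem_mul Submodule.mem_top hx)

theorem mem_right (N : Subgroup F) {x : MonoidAlgebra ℤ F} (y) (hx : x ∈ augI N) :
    x * y ∈ augI N := by
  rw [← augI_mul_top]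
  exact Submodule.mul_mem_mul hx Submodule.mem_top

theorem sub_one_mem (N : Subgroup F) {n : F} (hn : n ∈ N) : o n - 1 ∈ augI N := by
  have : o n - 1 ∈ aug N := Submodule.subset_span ⟨n, hn, rfl⟩
  have h := Submodule.mul_mem_mul this (Submodule.mem_top (x := 1))
  rwa [mul_one] at h

theorem augI_top_eq_span :
    augI (⊤ : Subgroup F) = Submodule.span ℤ {x | ∃ w, x = o w - 1} := by
  apply le_antisymm
  · rw [augI_eq_span, Submodule.span_le]
    rintro _ ⟨v, n, -, rfl⟩
    have : o v * (o n - 1) = (o (v * n) - 1) - (o v - 1) := by rw [o_mul]; noncomm_ring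
    rw [this]
    exact Submodule.sub_mem _ (Submodule.subset_span ⟨_, rfl⟩) (Submodule.subset_span ⟨_, rfl⟩)
  · rw [Submodule.span_le]
    rintro _ ⟨w, rfl⟩
    exact sub_one_mem _ trivial

theorem augI_le_top (N : Subgroup F) : augI N ≤ augI (⊤ : Subgroup F) := by
  unfold augI
  refine Submodule.mul_le.2 fun x hx y hy => Submodule.mul_mem_mul ?_ hy
  revert x
  apply Submodule.span_mono
  rintro _ ⟨n, -, rfl⟩
  exact ⟨n, trivial, rfl⟩

theorem diff_mem (N : Subgroup F) [hN : N.Normal] {g h : F} (hgh : g⁻¹ * h ∈ N) :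
    o h - o g ∈ augI N := by
  have : o h - o g = o g * (o (g⁻¹ * h) - 1) := by
    rw [mul_sub, ← o_mul]; simp
  rw [this]
  exact mem_left _ _ (sub_one_mem _ hgh)

theorem o_diff_mem (g h : F) : o h - o g ∈ augI (⊤ : Subgroup F) := diff_mem _ trivial

theorem st_mem (N : Subgroup F) [hN : N.Normal] {x : MonoidAlgebra ℤ F} (hx : x ∈ augI N) :
    st x ∈ augI N := by
  rw [augI_eq_span] at hx
  induction hx using Submodule.span_induction with
  | mem x h =>
    obtain ⟨v, n, hn, rfl⟩ := h
    rw [st_mul, st_sub, st_o, st_one, st_o]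
    exact mem_right _ _ (sub_one_mem _ (N.inv_mem hn))
  | zero => rw [st_zero]; exact Submodule.zero_mem _
  | add x y _ _ hx hy => rw [st_add]; exact Submodule.add_mem _ hx hy
  | smul n x _ hx => rw [st_smul]; exact Submodule.smul_mem _ n hx

theorem st_mem_mul (M N : Subgroup F) [M.Normal] [N.Normal] {x : MonoidAlgebra ℤ F}
    (hx : x ∈ augI M * augI N) : st x ∈ augI N * augI M := by
  induction hx using Submodule.mul_induction_on' with
  | mem_mul_mem x hx y hy =>
    rw [st_mul]; exact Submodule.mul_mem_mul (st_mem _ hy) (st_mem _ hx)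
  | add x _ y _ hx hy => rw [st_add]; exact Submodule.add_mem _ hx hy

end Ring

section Pairing

variable {F : Type} [Group F] (R : Subgroup F)

/-- the ideal `rrf + frr` -/
noncomputable abbrev JJ : Submodule ℤ (MonoidAlgebra ℤ F) :=
  augI R * augI R * augI (⊤ : Subgroup F) + augI (⊤ : Subgroup F) * augI R * augI R

/-- the quotient -/
abbrev QQ := MonoidAlgebra ℤ F ⧸ JJ R

/-- quotient map -/
noncomputable abbrev qq : MonoidAlgebra ℤ F →ₗ[ℤ] QQ R := (JJ R).mkQ

theorem qq_eq_zero {x : MonoidAlgebra ℤ F} (h : x ∈ JJ R) : qq R x = 0 := by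
  simpa [qq] using h

theorem rrf_mem {x y z : MonoidAlgebra ℤ F} (hx : x ∈ augI R) (hy : y ∈ augI R)
    (hz : z ∈ augI (⊤ : Subgroup F)) : x * y * z ∈ JJ R :=
  (le_sup_left : _ ≤ augI R * augI R * augI (⊤ : Subgroup F) ⊔ _)
    (Submodule.mul_mem_mul (Submodule.mul_mem_mul hx hy) hz)

theorem frr_mem {x y z : MonoidAlgebra ℤ F} (hx : x ∈ augI (⊤ : Subgroup F)) (hy : y ∈ augI R)
    (hz : z ∈ augI R) : x * y * z ∈ JJ R :=
  (le_sup_right : _ ≤ _ ⊔ augI (⊤ : Subgroup F) * augI R * augI R)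
    (Submodule.mul_mem_mul (Submodule.mul_mem_mul hx hy) hz)

/-- the pairing -/
noncomputable def B (x y : MonoidAlgebra ℤ F) : QQ R := qq R (st x * y)

theorem B_add_left (x x' y) : B R (x + x') y = B R x y + B R x' y := by
  unfold B; rw [st_add, add_mul, map_add]
theorem B_sub_left (x x' y) : B R (x - x') y = B R x y - B R x' y := by
  unfold B; rw [st_sub, sub_mul, map_sub]
theorem B_add_right (x y y') : B R x (y + y') = B R x y + B R x y' := by
  unfold B; rw [mul_add, map_add]
theorem B_sub_right (x y y') : B R x (y - y') = B R x y - B R x y' := by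
  unfold B; rw [mul_sub, map_sub]
theorem B_inv (v : F) (x y) : B R (o v * x) (o v * y) = B R x y := by
  unfold B; rw [st_mul, st_o]
  congr 1
  have : o v⁻¹ * o v = 1 := by rw [← o_mul, inv_mul_cancel, o_one]
  calc st x * o v⁻¹ * (o v * y) = st x * (o v⁻¹ * o v) * y := by noncomm_ring
    _ = _ := by rw [this, mul_one]

variable [hR : R.Normal]

theorem B_left {x y} (hx : x ∈ augI R * augI (⊤ : Subgroup F)) (hy : y ∈ augI R) :
    B R x y = 0 := by
  apply qq_eq_zero
  exact (le_sup_right : _ ≤ _ ⊔ augI (⊤ : Subgroup F) * augI R * augI R)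
    (Submodule.mul_mem_mul (st_mem_mul _ _ hx) hy)

theorem B_right {x y} (hx : x ∈ augI R) (hy : y ∈ augI R * augI (⊤ : Subgroup F)) :
    B R x y = 0 := by
  apply qq_eq_zero
  apply (le_sup_left : _ ≤ augI R * augI R * augI (⊤ : Subgroup F) ⊔ _)
  rw [mul_assoc]
  exact (Submodule.mul_mem_mul (st_mem _ hx) hy)

/-- normalized transversal -/
structure IsSec (s : F → F) : Prop where
  congr : ∀ w w' : F, (w : F ⧸ R) = w' → s w = s w'
  rep : ∀ w, ((s w : F) : F ⧸ R) = w
  one : s 1 = 1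

theorem exists_sec : ∃ s : F → F, IsSec R s := by
  classical
  refine ⟨fun w => if (w : F ⧸ R) = (1 : F) then 1 else (w : F ⧸ R).out, ?_, ?_, ?_⟩
  · intro w w' h
    simp only [h]
  · intro w
    by_cases h : (w : F ⧸ R) = (1 : F)
    · simp only [if_pos h]; exact h.symm
    · simp only [if_neg h]; exact QuotientGroup.out_eq' _
  · simp

variable {R} {s : F → F} (hs : IsSec R s)
include hs

theorem IsSec.memR {m : F} (hm : m ∈ R) : s m = 1 := by
  rw [hs.congr m 1, hs.one]
  rw [QuotientGroup.eq]; simpa using hm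

omit hs in
theorem mem_of_mk {g h : F} (e : (g : F ⧸ R) = h) : o g - o h ∈ augI R :=
  diff_mem R (QuotientGroup.eq.mp e.symm)

/-- triangle -/
noncomputable def FF (s : F → F) (a b c : F) : MonoidAlgebra ℤ F :=
  o a * (o (s (a⁻¹ * b)) * o (s (b⁻¹ * c)) - o (s (a⁻¹ * c)))

/-- triangle with an honest edge -/
noncomputable def GG (s : F → F) (c g w : F) : MonoidAlgebra ℤ F :=
  o c * (o (s (c⁻¹ * g)) * o w - o (s (c⁻¹ * (g * w))))

theorem FF_mem (a b c : F) : FF s a b c ∈ augI R := by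
  apply mem_left
  rw [← o_mul]
  apply mem_of_mk
  simp [hs.rep, mul_assoc]

theorem GG_mem (c g w : F) : GG s c g w ∈ augI R := by
  apply mem_left
  rw [← o_mul]
  apply mem_of_mk
  simp [hs.rep, mul_assoc]

theorem edge_mem (a b : F) : o b - o a * o (s (a⁻¹ * b)) ∈ augI R := by
  rw [← o_mul]
  apply mem_of_mk
  simp [hs.rep]

theorem tri_mem (a b c : F) :
    o a * o (s (a⁻¹ * b)) * o (s (b⁻¹ * c)) - o a * o (s (a⁻¹ * c)) ∈ augI R := by
  rw [← o_mul, ← o_mul, ← o_mul]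
  apply mem_of_mk
  simp [hs.rep, mul_assoc]

theorem FF_coc (a b c d : F) :
    FF s b c d - FF s a c d + FF s a b d - FF s a b c ∈ augI R * augI (⊤ : Subgroup F) := by
  have : FF s b c d - FF s a c d + FF s a b d - FF s a b c =
      (o b - o a * o (s (a⁻¹ * b))) * (o (s (b⁻¹ * c)) * o (s (c⁻¹ * d)) - o (s (b⁻¹ * d)))
      + (o a * o (s (a⁻¹ * b)) * o (s (b⁻¹ * c)) - o a * o (s (a⁻¹ * c))) *
        (o (s (c⁻¹ * d)) - 1) := by
    unfold FF; noncomm_ring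
  rw [this]
  refine Submodule.add_mem _ (Submodule.mul_mem_mul (edge_mem hs _ _) ?_)
    (Submodule.mul_mem_mul (tri_mem hs _ _ _) (sub_one_mem _ trivial))
  rw [← o_mul]; exact o_diff_mem _ _

theorem GG_coc (b c g w : F) :
    GG s c g w - GG s b g w + FF s b c (g * w) - FF s b c g ∈ augI R * augI (⊤ : Subgroup F) := by
  have : GG s c g w - GG s b g w + FF s b c (g * w) - FF s b c g =
      (o c - o b * o (s (b⁻¹ * c))) * (o (s (c⁻¹ * g)) * o w - o (s (c⁻¹ * (g * w))))
      + (o b * o (s (b⁻¹ * c)) * o (s (c⁻¹ * g)) - o b * o (s (b⁻¹ * g))) *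
        (o w - 1) := by
    unfold FF GG; noncomm_ring
  rw [this]
  refine Submodule.add_mem _ (Submodule.mul_mem_mul (edge_mem hs _ _) ?_)
    (Submodule.mul_mem_mul (tri_mem hs _ _ _) (sub_one_mem _ trivial))
  rw [← o_mul]; exact o_diff_mem _ _

theorem GG_path (c g w w' : F) :
    GG s c g (w * w') - GG s c g w - GG s c (g * w) w' ∈ augI R * augI (⊤ : Subgroup F) := by
  have : GG s c g (w * w') - GG s c g w - GG s c (g * w) w' =
      GG s c g w * (o w' - 1) := by
    unfold GG; rw [o_mul, mul_assoc g w w']; noncomm_ring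
  rw [this]
  exact Submodule.mul_mem_mul (GG_mem hs _ _ _) (sub_one_mem _ trivial)

theorem GG_loop (c m : F) (hm : m ∈ R) :
    GG s c 1 m - (o m - 1) ∈ augI R * augI (⊤ : Subgroup F) := by
  have h1 : s (c⁻¹ * (1 * m)) = s (c⁻¹ * 1) := by
    apply hs.congr
    rw [QuotientGroup.eq]
    have := R.inv_mem hm
    simpa [mul_assoc] using this
  have : GG s c 1 m - (o m - 1) = - ((o 1 - o c * o (s (c⁻¹ * 1))) * (o m - 1)) := by
    unfold GG; rw [h1, o_one]; noncomm_ring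
  rw [this]
  refine Submodule.neg_mem _ (Submodule.mul_mem_mul (edge_mem hs _ _) (sub_one_mem _ trivial))

omit hs hR in
theorem FF_inv (v a b c : F) : FF s (v * a) (v * b) (v * c) = o v * FF s a b c := by
  unfold FF; rw [o_mul]; simp only [mul_inv_rev, mul_assoc, inv_mul_cancel_left]

omit hs hR in
theorem GG_inv (v c g w : F) : GG s (v * c) (v * g) w = o v * GG s c g w := by
  unfold GG; rw [o_mul]; simp only [mul_inv_rev, mul_assoc, inv_mul_cancel_left]

theorem FF_congr (a b : F) {g g' : F} (h : (g : F ⧸ R) = g') : FF s a b g = FF s a b g' := by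
  unfold FF
  rw [hs.congr (a⁻¹ * g) (a⁻¹ * g') (by simp [h]), hs.congr (b⁻¹ * g) (b⁻¹ * g') (by simp [h])]

theorem GG_congr (c w : F) {g g' : F} (h : (g : F ⧸ R) = g') : GG s c g w = GG s c g' w := by
  unfold GG
  rw [hs.congr (c⁻¹ * g) (c⁻¹ * g') (by simp [h]),
    hs.congr (c⁻¹ * (g * w)) (c⁻¹ * (g' * w)) (by simp [h])]

omit hs in
/-- the cup-one cochain -/
noncomputable def TT (R : Subgroup F) (s : F → F) (a b g w : F) : QQ R :=
  B R (FF s a b (g * w)) (GG s b g w) - B R (GG s a g w) (FF s a b g)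

/-- its coboundary -/
noncomputable def UU (R : Subgroup F) (s : F → F) (a b c w g : F) : QQ R :=
  B R (FF s a b c) (GG s c g w) - B R (GG s a g w) (FF s a b c) +
    B R (FF s a b (g * w)) (FF s b c (g * w)) - B R (FF s a b g) (FF s b c g)

theorem TT_coc (a b c g w : F) :
    TT R s a b g w + TT R s b c g w - TT R s a c g w = UU R s a b c w g := by
  have h1 := B_left R (FF_coc hs a b c (g * w)) (GG_mem hs c g w)
  have h2 := B_right R (GG_mem hs a g w) (FF_coc hs a b c g)
  have h3 := B_right R (FF_mem hs a b (g * w)) (GG_coc hs b c g w)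
  have h4 := B_left R (GG_coc hs a b g w) (FF_mem hs b c g)
  simp only [B_sub_left, B_sub_right, B_add_left, B_add_right] at h1 h2 h3 h4
  unfold TT UU
  grind

theorem UU_path (a b c w w' g : F) :
    UU R s a b c (w * w') g = UU R s a b c w g + UU R s a b c w' (g * w) := by
  have h1 := B_right R (FF_mem hs a b c) (GG_path hs c g w w')
  have h2 := B_left R (GG_path hs a g w w') (FF_mem hs a b c)
  simp only [B_sub_left, B_sub_right, B_add_left, B_add_right] at h1 h2
  unfold UU
  rw [mul_assoc g w w']
  grind

theorem UU_loop (a b c m : F) (hm : m ∈ R) :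
    UU R s a b c m 1 = B R (FF s a b c) (o m - 1) - B R (o m - 1) (FF s a b c) := by
  have h1 := B_right R (FF_mem hs a b c) (GG_loop hs c m hm)
  have h2 := B_left R (GG_loop hs a m hm) (FF_mem hs a b c)
  rw [B_sub_right] at h1
  rw [B_sub_left] at h2
  have e : ((1 * m : F) : F ⧸ R) = (1 : F) := by
    rw [QuotientGroup.eq]; simpa using hm
  unfold UU
  rw [FF_congr hs a b e, FF_congr hs b c e]
  grind

omit hs hR in
theorem TT_inv (v a b g w : F) : TT R s (v * a) (v * b) (v * g) w = TT R s a b g w := by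
  unfold TT
  rw [mul_assoc v g w, FF_inv, FF_inv, GG_inv, GG_inv, B_inv, B_inv]

theorem TT_congr (a b w : F) {g g' : F} (h : (g : F ⧸ R) = g') :
    TT R s a b g w = TT R s a b g' w := by
  unfold TT
  rw [FF_congr hs a b h, GG_congr hs a w h, GG_congr hs b w h,
    FF_congr hs a b (g := g * w) (g' := g' * w) (by simp [h])]

theorem TT_zero (n g w : F) (hn : n ∈ R) : TT R s 1 n g w = 0 := by
  have h : ∀ c, FF s 1 n c = 0 := by
    intro c
    unfold FF
    have e1 : s (1⁻¹ * n) = 1 := hs.memR (by simpa using hn)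
    have e2 : s (n⁻¹ * c) = s (1⁻¹ * c) := by
      apply hs.congr
      have : (n : F ⧸ R) = 1 := by simpa using hn
      simp [this]
    rw [e1, e2, o_one, one_mul, one_mul, sub_self]
  unfold TT
  rw [h, h]
  simp [B, st_zero]

end Pairing

section Main

variable {F : Type} [Group F] {R : Subgroup F} [hR : R.Normal]

/-- the map extending `flip - id`, as a function of a relator and a group element -/
noncomputable def CC (R : Subgroup F) (s : F → F) (t : F → F → F → F → QQ R) (m w : F) : QQ R :=
  B R (o w - o (s w)) (o m - 1) - B R (o m - 1) (o w - o (s w)) + t 1 w m 1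

theorem exists_t [IsFreeGroup F] {s : F → F} (hs : IsSec R s) :
    ∃ t : F → F → F → F → QQ R,
      (∀ a b, IsPath (t a b)) ∧
      (∀ a b c w g, t a b w g + t b c w g - t a c w g = UU R s a b c w g) ∧
      (∀ v a b w g, t (v * a) (v * b) w (v * g) = t a b w g) ∧
      (∀ a b w (g g' : F), (g : F ⧸ R) = g' → t a b w g = t a b w g') ∧
      (∀ n w g, n ∈ R → t 1 n w g = 0) := by
  choose t hp hg using fun a b => exists_path (F := F) (fun w g => TT R s a b g w)
  refine ⟨t, hp, ?_, ?_, ?_, ?_⟩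
  · intro a b c w g
    apply IsPath.ext (Φ := fun w g => t a b w g + t b c w g - t a c w g)
      (Ψ := fun w g => UU R s a b c w g)
    · intro w w' v
      simp only [hp a b w w' v, hp b c w w' v, hp a c w w' v]
      abel
    · intro w w' v
      exact UU_path hs a b c w w' v
    · intro x v
      simp only [hg]
      exact TT_coc hs a b c v _
  · intro v a b w g
    apply IsPath.ext (Φ := fun w g => t (v * a) (v * b) w (v * g)) (Ψ := fun w g => t a b w g)
    · intro w w' u
      simp only [hp (v * a) (v * b) w w' (v * u), mul_assoc]
    · exact hp a b
    · intro x u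
      simp only [hg]
      exact TT_inv v a b u _
  · intro a b w
    apply gen_ind (fun w => ∀ g g' : F, (g : F ⧸ R) = g' → t a b w g = t a b w g')
    · intro g g' _; rw [(hp a b).one, (hp a b).one]
    · intro x g g' h; rw [hg, hg]; exact TT_congr hs a b _ h
    · intro w w' h h' g g' e
      rw [hp a b, hp a b, h g g' e, h' (g * w) (g' * w) (by simp [e])]
    · intro w h g g' e
      rw [(hp a b).inv, (hp a b).inv, h (g * w⁻¹) (g' * w⁻¹) (by simp [e])]
  · intro n w g hn
    apply IsPath.ext (Φ := fun w g => t 1 n w g) (Ψ := fun w g => 0)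
    · exact hp 1 n
    · intro w w' v; simp
    · intro x v
      simp only [hg]
      exact TT_zero hs n v _ hn

theorem exists_C [IsFreeGroup F] {s : F → F} (hs : IsSec R s) :
    ∃ C : F → F → QQ R,
      (∀ m m' w, m ∈ R → m' ∈ R → C (m * m') w = C m w + C m' w) ∧
      (∀ m v w, m ∈ R → C m (v * w) = C m v + C (v⁻¹ * m * v) w) ∧
      (∀ m n, m ∈ R → n ∈ R →
        C m n = B R (o n - 1) (o m - 1) - B R (o m - 1) (o n - 1)) := by
  obtain ⟨t, hp, hcoc, hinv, hcongr, hzero⟩ := exists_t hs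
  have hy : ∀ w, o w - o (s w) ∈ augI R := fun w => mem_of_mk (hs.rep w).symm
  refine ⟨CC R s t, ?_, ?_, ?_⟩
  · intro m m' w hm hm'
    have h0 : (o (m * m') - 1) - (o m - 1) - (o m' - 1) ∈ augI R * augI (⊤ : Subgroup F) := by
      have : (o (m * m') - 1) - (o m - 1) - (o m' - 1) = (o m - 1) * (o m' - 1) := by
        rw [o_mul]; noncomm_ring
      rw [this]
      exact Submodule.mul_mem_mul (sub_one_mem _ hm) (sub_one_mem _ trivial)
    have h1 := B_left R h0 (hy w)
    have h2 := B_right R (hy w) h0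
    rw [B_sub_left, B_sub_left] at h1
    rw [B_sub_right, B_sub_right] at h2
    have h3 := hp 1 w m m' 1
    have h4 := hcongr 1 w m' (1 * m) 1 (by simpa using hm)
    unfold CC
    grind
  · intro m v w hm
    have hm' : v⁻¹ * m * v ∈ R := by simpa using hR.conj_mem m hm v⁻¹
    have hvw : (o (v * w) - o (s (v * w))) - (o v - o (s v)) - o v * (o w - o (s w))
        - FF s 1 v (v * w) ∈ augI R * augI (⊤ : Subgroup F) := by
      have : (o (v * w) - o (s (v * w))) - (o v - o (s v)) - o v * (o w - o (s w))
        - FF s 1 v (v * w) = (o v - o (s v)) * (o (s w) - 1) := by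
        unfold FF
        rw [inv_one, one_mul, one_mul, inv_mul_cancel_left, o_one, o_mul]
        noncomm_ring
      rw [this]
      exact Submodule.mul_mem_mul (hy v) (sub_one_mem _ trivial)
    have h0 : (o m - 1) - o v * (o (v⁻¹ * m * v) - 1) ∈ augI R * augI (⊤ : Subgroup F) := by
      have : (o m - 1) - o v * (o (v⁻¹ * m * v) - 1) = - ((o m - 1) * (o v - 1)) := by
        rw [mul_sub, ← o_mul]
        have : v * (v⁻¹ * m * v) = m * v := by group
        rw [this, o_mul]; noncomm_ring
      rw [this]
      exact Submodule.neg_mem _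
        (Submodule.mul_mem_mul (sub_one_mem _ hm) (sub_one_mem _ trivial))
    have hM := sub_one_mem R hm
    have hvy : o v * (o w - o (s w)) ∈ augI R := mem_left _ _ (hy w)
    have h1 := B_left R hvw hM
    have h2 := B_right R hM hvw
    have h3 := B_left R h0 hvy
    have h4 := B_right R hvy h0
    simp only [B_sub_left R (_ - _ - _) (FF _ _ _ _), B_sub_left R (_ - _) (o v * _),
      B_sub_left R (_ - _) (_ - _)] at h1
    simp only [B_sub_right R _ (_ - _ - _) (FF _ _ _ _), B_sub_right R _ (_ - _) (o v * _),
      B_sub_right R _ (_ - _) (_ - _)] at h2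
    rw [B_sub_left R _ (o v * _), B_inv] at h3
    rw [B_sub_right R _ _ (o v * _), B_inv] at h4
    have h5 := hcoc 1 v (v * w) m 1
    rw [UU_loop hs _ _ _ _ hm] at h5
    have h6 := hinv v 1 w (v⁻¹ * m * v) 1
    rw [mul_one] at h6
    have h7 := hp v (v * w) m v 1
    have h8 := hp v (v * w) v (v⁻¹ * m * v) 1
    have e9 : v * (v⁻¹ * m * v) = m * v := by group
    rw [e9, one_mul] at h8
    have h10 := hcongr v (v * w) v (1 * m) 1 (by simpa using hm)
    unfold CC
    grind
  · intro m n hm hn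
    unfold CC
    rw [hs.memR hn, hzero n m 1 hn, o_one, add_zero]

theorem exists_H [IsFreeGroup F] :
    ∃ H : MonoidAlgebra ℤ F →ₗ[ℤ] QQ R,
      (∀ x ∈ augI (⊤ : Subgroup F) * augI R * augI (⊤ : Subgroup F), H x = 0) ∧
      (∀ v m n, m ∈ R → n ∈ R → H (o v * (o m - 1) * (o n - 1)) =
        B R (o n - 1) (o m - 1) - B R (o m - 1) (o n - 1)) := by
  obtain ⟨s, hs⟩ := exists_sec R
  obtain ⟨C, hadd, hcoc, hval⟩ := exists_C hs
  obtain ⟨Ψ, hp, hg⟩ := exists_path (F := F) (fun w v => C ((s v)⁻¹ * v) w)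
  have hrep : ∀ v, (s v)⁻¹ * v ∈ R := fun v => QuotientGroup.eq.mp (hs.rep v)
  have key : ∀ w v m, m ∈ R → Ψ w (v * m) - Ψ w v = C m w := by
    intro w
    apply gen_ind (fun w => ∀ v m, m ∈ R → Ψ w (v * m) - Ψ w v = C m w)
    · intro v m hm
      rw [hp.one, hp.one]
      have := hcoc m 1 1 hm
      simp only [mul_one, inv_one, one_mul] at this
      rw [sub_self]
      symm
      simpa using this
    · intro x v m hm
      rw [hg, hg]
      have e : s (v * m) = s v := hs.congr _ _ (by simpa using hm)
      rw [e, ← mul_assoc, hadd _ _ _ (hrep v) hm]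
      abel
    · intro a b ha hb v m hm
      have hm' : a⁻¹ * m * a ∈ R := by simpa using hR.conj_mem m hm a⁻¹
      have h1 := ha v m hm
      have h2 := hb (v * a) (a⁻¹ * m * a) hm'
      have e : v * a * (a⁻¹ * m * a) = v * m * a := by group
      rw [e] at h2
      rw [hp, hp, hcoc m a b hm, ← h1, ← h2]
      abel
    · intro a ha v m hm
      have hm' : a * m * a⁻¹ ∈ R := hR.conj_mem m hm a
      have h1 := ha (v * a⁻¹) (a * m * a⁻¹) hm'
      have e : v * a⁻¹ * (a * m * a⁻¹) = v * m * a⁻¹ := by group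
      rw [e] at h1
      have h2 := hcoc (a * m * a⁻¹) a a⁻¹ hm'
      have h3 := hcoc (a * m * a⁻¹) 1 1 hm'
      have e2 : a⁻¹ * (a * m * a⁻¹) * a = m := by group
      rw [e2, mul_inv_cancel] at h2
      simp only [mul_one, inv_one, one_mul] at h3
      rw [hp.inv, hp.inv]
      grind
  obtain ⟨H, hH⟩ := exists_lin (F := F) (fun w => Ψ w 1)
  have hH2 : ∀ v w, H (o v * (o w - 1)) = Ψ w v := by
    intro v w
    rw [mul_sub, mul_one, ← o_mul, map_sub, hH, hH, hp, one_mul]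
    abel
  have hH3 : ∀ v m w, m ∈ R → H (o v * (o m - 1) * (o w - 1)) = C m w := by
    intro v m w hm
    have : o v * (o m - 1) * (o w - 1) = o (v * m) * (o w - 1) - o v * (o w - 1) := by
      rw [o_mul]; noncomm_ring
    rw [this, map_sub, hH2, hH2, key w v m hm]
  refine ⟨H, ?_, ?_⟩
  · have : augI (⊤ : Subgroup F) * augI R * augI (⊤ : Subgroup F) ≤ LinearMap.ker H := by
      rw [augI_top_eq_span, augI_eq_span R, Submodule.span_mul_span, Submodule.span_mul_span,
        Submodule.span_le]
      rintro _ ⟨_, ⟨_, ⟨u, rfl⟩, _, ⟨v, m, hm, rfl⟩, rfl⟩, _, ⟨w, rfl⟩, rfl⟩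
      change H ((o u - 1) * (o v * (o m - 1)) * (o w - 1)) = 0
      have : (o u - 1) * (o v * (o m - 1)) * (o w - 1) =
          o (u * v) * (o m - 1) * (o w - 1) - o v * (o m - 1) * (o w - 1) := by
        rw [o_mul]; noncomm_ring
      rw [this, map_sub, hH3 _ _ _ hm, hH3 _ _ _ hm, sub_self]
    exact fun x hx => this hx
  · intro v m n hm hn
    rw [hH3 v m n hm, hval m n hm hn]

theorem H_eq (H : MonoidAlgebra ℤ F →ₗ[ℤ] QQ R)
    (hH : ∀ v m n, m ∈ R → n ∈ R → H (o v * (o m - 1) * (o n - 1)) =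
        B R (o n - 1) (o m - 1) - B R (o m - 1) (o n - 1))
    (x : MonoidAlgebra ℤ F) (hx : x ∈ augI R * augI R) : H x = qq R (x - st x) := by
  have hgen : augI R * augI R ≤ Submodule.span ℤ
      {x | ∃ v m n, m ∈ R ∧ n ∈ R ∧ x = o v * (o m - 1) * (o n - 1)} := by
    conv_lhs => rw [augI_eq_span R, Submodule.span_mul_span]
    apply Submodule.span_mono
    rintro _ ⟨_, ⟨v, m, hm, rfl⟩, _, ⟨w, n, hn, rfl⟩, rfl⟩
    refine ⟨v * w, w⁻¹ * m * w, n, by simpa using hR.conj_mem m hm w⁻¹, hn, ?_⟩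
    have : o (v * w) * (o (w⁻¹ * m * w) - 1) = o v * (o m - 1) * o w := by
      rw [mul_sub, ← o_mul]
      have : v * w * (w⁻¹ * m * w) = v * m * w := by group
      rw [this, o_mul, o_mul, o_mul]; noncomm_ring
    rw [this]
    change o v * (o m - 1) * (o w * (o n - 1)) = _
    noncomm_ring
  have hx' := hgen hx
  clear hx
  induction hx' using Submodule.span_induction with
  | zero => simp [st_zero]
  | add x y _ _ hx hy =>
    rw [map_add, hx, hy, st_add, ← map_add]; congr 1; abel
  | smul n x _ hx => rw [map_smul, hx, st_smul, ← map_smul, smul_sub]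
  | mem x h =>
    obtain ⟨v, m, n, hm, hn, rfl⟩ := h
    rw [hH v m n hm hn]
    unfold B
    rw [← map_sub, ← sub_eq_zero, ← map_sub]
    apply qq_eq_zero
    simp only [st_mul, st_sub, st_o, st_one]
    have hM := sub_one_mem R hm
    have hN := sub_one_mem R hn
    have hM' := sub_one_mem R (R.inv_mem hm)
    have hN' := sub_one_mem R (R.inv_mem hn)
    have eM : o m * o m⁻¹ = 1 := by rw [← o_mul, mul_inv_cancel, o_one]
    have eMM : (o m - 1) + (o m⁻¹ - 1) = - ((o m - 1) * (o m⁻¹ - 1)) := by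
      rw [sub_mul, mul_sub, eM]; noncomm_ring
    have h1 : (o n⁻¹ - 1) * ((o m - 1) + (o m⁻¹ - 1)) ∈ JJ R := by
      rw [eMM, mul_neg, ← mul_assoc]
      exact Submodule.neg_mem _ (rrf_mem R hN' hM (sub_one_mem _ trivial))
    have h2 : ((o m - 1) + (o m⁻¹ - 1)) * (o n - 1) ∈ JJ R := by
      rw [eMM, neg_mul]
      exact Submodule.neg_mem _ (frr_mem R (sub_one_mem _ trivial) hM' hN)
    have h3 : (o v - 1) * (o m - 1) * (o n - 1) ∈ JJ R :=
      frr_mem R (sub_one_mem _ trivial) hM hN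
    have h4 : (o n⁻¹ - 1) * (o m⁻¹ - 1) * (o v⁻¹ - 1) ∈ JJ R :=
      rrf_mem R hN' hM' (sub_one_mem _ trivial)
    have := Submodule.add_mem _ (Submodule.sub_mem _ (Submodule.sub_mem _ h1 h2) h3) h4
    convert this using 1
    noncomm_ring

theorem mem_R_of (a : F) (ha : o a - 1 ∈ augI R) : a ∈ R := by
  obtain ⟨H, hH⟩ := exists_lin (F := F) (fun w => Finsupp.single (w : F ⧸ R) (1 : ℤ))
  have : augI R ≤ LinearMap.ker H := by
    rw [augI_eq_span R, Submodule.span_le]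
    rintro _ ⟨v, m, hm, rfl⟩
    change H (o v * (o m - 1)) = 0
    have e : ((v * m : F) : F ⧸ R) = v := by simpa using hm
    rw [mul_sub, mul_one, ← o_mul, map_sub, hH, hH, e, sub_self]
  have h := this ha
  rw [LinearMap.mem_ker, ← o_one, map_sub, hH, hH, sub_eq_zero] at h
  have h2 := Finsupp.single_left_injective (one_ne_zero) h
  simpa using h2

theorem mem_rr (a : F) (haR : a ∈ R) (ha : o a - 1 ∈ augI (⊤ : Subgroup F) * augI R) :
    o a - 1 ∈ augI R * augI R := by
  obtain ⟨s, hs⟩ := exists_sec R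
  have hrep : ∀ v, (s v)⁻¹ * v ∈ R := fun v => QuotientGroup.eq.mp (hs.rep v)
  obtain ⟨H, hH⟩ := exists_lin (F := F)
    (fun w => (augI R * augI R).mkQ (o ((s w)⁻¹ * w) - 1))
  have key : ∀ v m, m ∈ R → H (o v * (o m - 1)) = (augI R * augI R).mkQ (o m - 1) := by
    intro v m hm
    have e : s (v * m) = s v := hs.congr _ _ (by simpa using hm)
    rw [mul_sub, mul_one, ← o_mul, map_sub, hH, hH, e, ← mul_assoc, ← map_sub, ← sub_eq_zero,
      ← map_sub, Submodule.mkQ_apply, Submodule.Quotient.mk_eq_zero]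
    have := Submodule.mul_mem_mul (sub_one_mem R (hrep v)) (sub_one_mem R hm)
    convert this using 1
    rw [o_mul]
    noncomm_ring
  have : augI (⊤ : Subgroup F) * augI R ≤ LinearMap.ker H := by
    conv_lhs => rw [augI_top_eq_span, augI_eq_span R, Submodule.span_mul_span]
    rw [Submodule.span_le]
    rintro _ ⟨_, ⟨u, rfl⟩, _, ⟨v, m, hm, rfl⟩, rfl⟩
    change H ((o u - 1) * (o v * (o m - 1))) = 0
    have e : (o u - 1) * (o v * (o m - 1)) = o (u * v) * (o m - 1) - o v * (o m - 1) := by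
      rw [o_mul]; noncomm_ring
    rw [e, map_sub, key _ _ hm, key _ _ hm, sub_self]
  have h := this ha
  have k := key 1 a haR
  rw [o_one, one_mul, LinearMap.mem_ker.mp h] at k
  rw [Submodule.mkQ_apply, eq_comm, Submodule.Quotient.mk_eq_zero] at k
  exact k

theorem main [IsFreeGroup F] (a : F)
    (ha : o a - 1 ∈ augI (⊤ : Subgroup F) * augI R * augI (⊤ : Subgroup F)) :
    o (a ^ 2) - 1 ∈ JJ R := by
  have h1 : o a - 1 ∈ augI (⊤ : Subgroup F) * augI R := by
    have : augI (⊤ : Subgroup F) * augI R * augI (⊤ : Subgroup F) ≤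
        augI (⊤ : Subgroup F) * augI R := by
      rw [mul_assoc]
      exact Submodule.mul_le.2 fun x hx y hy => Submodule.mul_mem_mul hx
        ((Submodule.mul_le.2 fun z hz w _ => mem_right R w hz :
          augI R * augI (⊤ : Subgroup F) ≤ augI R) hy)
    exact this ha
  have h2 : o a - 1 ∈ augI R :=
    (Submodule.mul_le.2 fun z _ w hw => mem_left R z hw :
          augI (⊤ : Subgroup F) * augI R ≤ augI R) h1
  have h3 := mem_rr a (mem_R_of a h2) h1
  obtain ⟨H, hk, hv⟩ := exists_H (R := R)
  have h4 := H_eq H hv _ h3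
  rw [hk _ ha, eq_comm, Submodule.mkQ_apply, Submodule.Quotient.mk_eq_zero] at h4
  rw [st_sub, st_one, st_o] at h4
  have h5 : o a - 1 - (o a⁻¹ - 1) + (o a - 1) * (o a - 1 - (o a⁻¹ - 1)) = o (a ^ 2) - 1 := by
    have e : o a * o a⁻¹ = 1 := by rw [← o_mul, mul_inv_cancel, o_one]
    have e2 : o (a ^ 2) = o a * o a := by rw [pow_two, o_mul]
    rw [e2]
    have : o a - 1 - (o a⁻¹ - 1) + (o a - 1) * (o a - 1 - (o a⁻¹ - 1)) =
      o a * o a - o a * o a⁻¹ := by noncomm_ring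
    rw [this, e]
  rw [← h5]
  refine Submodule.add_mem _ h4 ?_
  exact (le_sup_left : _ ≤ augI R * augI R * augI (⊤ : Subgroup F) ⊔ _)
    (Submodule.mul_mem_mul h3
      (Submodule.sub_mem _ (sub_one_mem _ trivial) (sub_one_mem _ trivial)))

end Main

end Stohr

/-- Theorem 5.1, Stöhr: if `a ∈ D(F, 𝐟𝐫𝐟)` then `a² ∈ D(F, 𝐫𝐫𝐟 + 𝐟𝐫𝐫)`. -/
theorem stohr_square (F : Type) [Group F] [IsFreeGroup F]
    (R : Subgroup F) [R.Normal] (a : F)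
    (ha : (MonoidAlgebra.of ℤ F a) - 1 ∈
      augI (⊤ : Subgroup F) * augI R * augI (⊤ : Subgroup F)) :
    (MonoidAlgebra.of ℤ F (a ^ 2)) - 1 ∈
      augI R * augI R * augI (⊤ : Subgroup F) +
        augI (⊤ : Subgroup F) * augI R * augI R := by
  exact Stohr.main a ha
end

section
/- Let F be a free group and R, S, T normal subgroups of F with R ⊆ S and R ⊆ T, and let 𝐫, 𝐬, 𝐭 be the two-sided ideals of ℤ[F] generated by the augmentation ideals of R, S, T. If a ∈ D(F, 𝐬𝐫𝐭 + 𝐭𝐫𝐬), then a⁴ ∈ [R, R, ST], where [R, R, ST] = [[R,R], ST] and ST is the (normal) subgroup generated by S and T. -/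
/-- linear extension to `ℤ[F]` of a function on `F` -/
noncomputable def linExt {F V : Type} [Group F] [AddCommGroup V] (φ : F → V) :
    MonoidAlgebra ℤ F →ₗ[ℤ] V :=
  (Finsupp.linearCombination ℤ φ) ∘ₗ (MonoidAlgebra.coeffLinearEquiv ℤ).toLinearMap

theorem linExt_of {F V : Type} [Group F] [AddCommGroup V] (φ : F → V) (g : F) :
    linExt φ (MonoidAlgebra.of ℤ F g) = φ g := by
  change Finsupp.linearCombination ℤ φ (Finsupp.single g 1) = φ g
  simp

theorem top_eq_span_of (F : Type) [Group F] :
    (⊤ : Submodule ℤ (MonoidAlgebra ℤ F)) =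
      Submodule.span ℤ (Set.range (MonoidAlgebra.of ℤ F)) := by
  symm
  rw [eq_top_iff]
  intro x _
  induction x using MonoidAlgebra.induction_on with
  | of g => exact Submodule.subset_span ⟨g, rfl⟩
  | add a b ha hb => exact Submodule.add_mem _ (ha trivial) (hb trivial)
  | smul r a ha => exact Submodule.smul_mem _ _ (ha trivial)

/-- vanishing of the third difference, the middle difference being along `R` -/
def ThirdDiff {F V : Type} [Group F] [AddCommGroup V] (H R : Subgroup F) (φ : F → V) : Prop :=
  ∀ s ∈ H, ∀ r ∈ R, ∀ t ∈ H, ∀ g : F,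
    φ (s * r * t * g) - φ (s * r * g) - φ (s * t * g) - φ (r * t * g)
      + φ (s * g) + φ (r * g) + φ (t * g) - φ g = 0

theorem linExt_vanish {F V : Type} [Group F] [AddCommGroup V] (H R S T : Subgroup F)
    [R.Normal] [T.Normal] (hS : S ≤ H) (hT : T ≤ H) (φ : F → V) (h : ThirdDiff H R φ) :
    augI S * augI R * augI T ≤ LinearMap.ker (linExt φ) := by
  unfold augI aug
  rw [top_eq_span_of]
  simp only [Submodule.span_mul_span]
  rw [Submodule.span_le]
  rintro _ ⟨_, ⟨_, ⟨_, ⟨s, hs, rfl⟩, _, ⟨g1, rfl⟩, rfl⟩, _, ⟨_, ⟨r, hr, rfl⟩, _, ⟨g2, rfl⟩, rfl⟩, rfl⟩,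
    _, ⟨_, ⟨t, ht, rfl⟩, _, ⟨g3, rfl⟩, rfl⟩, rfl⟩
  have key := h s (hS hs) (g1 * r * g1⁻¹) (Subgroup.Normal.conj_mem inferInstance r hr g1)
    ((g1 * g2) * t * (g1 * g2)⁻¹) (hT (Subgroup.Normal.conj_mem inferInstance t ht _))
    (g1 * g2 * g3)
  rw [SetLike.mem_coe, LinearMap.mem_ker]
  simp only [sub_mul, mul_sub, one_mul, ← map_mul, map_sub, linExt_of]
  rw [← key]
  simp only [mul_assoc, mul_inv_rev, inv_mul_cancel_left]
  abel

theorem eq_of_thirdDiff {F V : Type} [Group F] [AddCommGroup V] (R S T : Subgroup F)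
    [R.Normal] [S.Normal] [T.Normal] (a : F)
    (ha : (MonoidAlgebra.of ℤ F a) - 1 ∈ augI S * augI R * augI T + augI T * augI R * augI S)
    (φ : F → V) (h : ThirdDiff (S ⊔ T) R φ) : φ a = φ 1 := by
  have h1 := linExt_vanish (S ⊔ T) R S T le_sup_left le_sup_right φ h
  have h2 := linExt_vanish (S ⊔ T) R T S le_sup_right le_sup_left φ h
  have h3 : (MonoidAlgebra.of ℤ F a) - 1 ∈ LinearMap.ker (linExt φ) := by
    refine (sup_le h1 h2) ?_
    exact ha
  rw [LinearMap.mem_ker, map_sub, linExt_of, ← map_one (MonoidAlgebra.of ℤ F), linExt_of,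
    sub_eq_zero] at h3
  exact h3

theorem mem_of_thirdDiff {F : Type} [Group F] (R S T : Subgroup F)
    [R.Normal] [S.Normal] [T.Normal] (a : F)
    (ha : (MonoidAlgebra.of ℤ F a) - 1 ∈ augI S * augI R * augI T + augI T * augI R * augI S) :
    a ∈ R := by
  classical
  have h := eq_of_thirdDiff R S T a ha (fun g => if g ∈ R then (1 : ℤ) else 0) ?_
  · by_contra hc
    simp [hc, R.one_mem] at h
  · intro s _ r hr t _ g
    have e1 : ∀ x y : F, (x * r * y ∈ R ↔ x * y ∈ R) := by
      intro x y
      have hn : (y⁻¹ * r * y) ∈ R := by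
        simpa using Subgroup.Normal.conj_mem (inferInstance : R.Normal) r hr y⁻¹
      have h0 : x * r * y = (x * y) * (y⁻¹ * r * y) := by group
      rw [h0, Subgroup.mul_mem_cancel_right R hn]
    have e2 : ∀ y : F, (r * y ∈ R ↔ y ∈ R) := fun y => Subgroup.mul_mem_cancel_left R hr
    have e3 := e1 s (t * g)
    simp only [mul_assoc] at e3
    have e4 := e1 s g
    simp only [mul_assoc] at e4
    simp only [mul_assoc, e2, e3, e4]
    ring

theorem eq_of_thirdDiff_sub {F V : Type} [Group F] [AddCommGroup V] (R S T : Subgroup F)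
    [R.Normal] [S.Normal] [T.Normal] (hRS : R ≤ S) (a : F)
    (ha : (MonoidAlgebra.of ℤ F a) - 1 ∈ augI S * augI R * augI T + augI T * augI R * augI S)
    (haH : a ∈ S ⊔ T)
    (φ : ↥(S ⊔ T) → V) (h : ThirdDiff ⊤ (R.subgroupOf (S ⊔ T)) φ) : φ ⟨a, haH⟩ = φ 1 := by
  classical
  have key := eq_of_thirdDiff R S T a ha
    (fun g => if hg : g ∈ S ⊔ T then φ ⟨g, hg⟩ else 0) ?_
  · rw [dif_pos haH, dif_pos (Subgroup.one_mem _)] at key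
    exact key
  · intro s hs r hr t ht g
    have hrH : r ∈ S ⊔ T := (hRS.trans le_sup_left) hr
    have e : ∀ x ∈ S ⊔ T, ∀ y, (x * y ∈ S ⊔ T ↔ y ∈ S ⊔ T) :=
      fun x hx y => Subgroup.mul_mem_cancel_left _ hx
    by_cases hg : g ∈ S ⊔ T
    · have := h ⟨s, hs⟩ trivial ⟨r, hrH⟩ hr ⟨t, ht⟩ trivial ⟨g, hg⟩
      simpa [mul_assoc, e s hs, e r hrH, e t ht, hg] using this
    · simp [mul_assoc, e s hs, e r hrH, e t ht, hg]

/-- On a free group a function may be prescribed by its increments along the generators. -/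
theorem exists_increment {G V : Type} [Group G] [IsFreeGroup G] [AddCommGroup V]
    (w : G → G → V) :
    ∃ Q : G → V, Q 1 = 0 ∧
      ∀ g (x : IsFreeGroup.Generators G), Q (g * IsFreeGroup.of x) = Q g + w g (g * IsFreeGroup.of x) := by
  classical
  let p : IsFreeGroup.Generators G → Equiv.Perm (G × V) := fun x =>
    { toFun := fun z => (z.1 * IsFreeGroup.of x, z.2 + w z.1 (z.1 * IsFreeGroup.of x))
      invFun := fun z => (z.1 * (IsFreeGroup.of x)⁻¹, z.2 - w (z.1 * (IsFreeGroup.of x)⁻¹) z.1)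
      left_inv := fun z => by ext <;> simp
      right_inv := fun z => by ext <;> simp }
  let L : G →* (Equiv.Perm (G × V))ᵐᵒᵖ := IsFreeGroup.lift (fun x => MulOpposite.op (p x))
  have hL : ∀ g x (z : G × V), (L (g * IsFreeGroup.of x)).unop z = p x ((L g).unop z) := by
    intro g x z
    rw [map_mul]
    have : L (IsFreeGroup.of x) = MulOpposite.op (p x) := IsFreeGroup.lift_of _ _
    rw [this]
    rfl
  -- the first component
  let first : G →* (Equiv.Perm G)ᵐᵒᵖ :=
    { toFun := fun g => MulOpposite.op (Equiv.mulRight g)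
      map_one' := by
        apply MulOpposite.unop_injective
        ext; simp
      map_mul' := fun a b => by
        apply MulOpposite.unop_injective
        ext; simp [mul_assoc] }
  have hfst : ∀ g (z : G × V), ((L g).unop z).1 = z.1 * g := by
    have hcl : ∀ g : G, g ∈ Subgroup.closure (Set.range (IsFreeGroup.of (G := G))) := by
      intro g
      let K := Subgroup.closure (Set.range (IsFreeGroup.of (G := G)))
      let f : G →* K := IsFreeGroup.lift (fun x => ⟨IsFreeGroup.of x, Subgroup.subset_closure ⟨x, rfl⟩⟩)
      have : K.subtype.comp f = MonoidHom.id G := by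
        apply IsFreeGroup.ext_hom
        intro a
        simp [f]
      have h2 := DFunLike.congr_fun this g
      simp only [MonoidHom.comp_apply, MonoidHom.id_apply] at h2
      rw [← h2]
      exact (f g).2
    intro g
    induction hcl g using Subgroup.closure_induction with
    | mem x hx =>
      obtain ⟨y, rfl⟩ := hx
      intro z
      have := hL 1 y z
      simp only [one_mul, map_one] at this
      rw [this]
      rfl
    | one => intro z; simp
    | mul a b _ _ ha hb =>
      intro z
      rw [map_mul, MulOpposite.unop_mul, Equiv.Perm.mul_apply, hb, ha, mul_assoc]
    | inv a _ ha =>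
      intro z
      have := ha ((L a⁻¹).unop z)
      rw [map_inv, MulOpposite.unop_inv, ← Equiv.Perm.mul_apply, mul_inv_cancel, Equiv.Perm.one_apply] at this
      rw [map_inv, MulOpposite.unop_inv, this]
      simp
  refine ⟨fun g => ((L g).unop (1, 0)).2, by simp, ?_⟩
  intro g x
  change ((L (g * IsFreeGroup.of x)).unop (1, 0)).2 = _
  rw [hL]
  change ((L g).unop (1, 0)).2 + w ((L g).unop (1, 0)).1 (((L g).unop (1, 0)).1 * IsFreeGroup.of x) = _
  rw [hfst]
  simp

theorem const_of_increment {G V : Type} [Group G] [IsFreeGroup G]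
    (f : G → V) (h : ∀ g (x : IsFreeGroup.Generators G), f (g * IsFreeGroup.of x) = f g) (g : G) :
    f g = f 1 := by
  let K : Subgroup G :=
    { carrier := {k | ∀ g, f (g * k) = f g}
      one_mem' := fun g => by simp
      mul_mem' := fun {a b} ha hb g => by rw [← mul_assoc, hb, ha]
      inv_mem' := fun {a} ha g => by
        have := ha (g * a⁻¹)
        simpa using this.symm }
  let e : G →* K := IsFreeGroup.lift (fun x => ⟨IsFreeGroup.of x, fun g => h g x⟩)
  have he : K.subtype.comp e = MonoidHom.id G := by
    apply IsFreeGroup.ext_hom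
    intro a
    simp [e]
  have h2 := DFunLike.congr_fun he g
  simp only [MonoidHom.comp_apply, MonoidHom.id_apply] at h2
  have h3 : g ∈ K := by
    rw [← h2]
    exact (e g).2
  simpa using h3 1

/-- conjugation of an element of a normal subgroup -/
def cj {G : Type} [Group G] (R : Subgroup G) [hR : R.Normal] (g : G) (r : R) : R :=
  ⟨g * r * g⁻¹, hR.conj_mem r r.2 g⟩

theorem exists_quad {G V : Type} [Group G] [IsFreeGroup G] [AddCommGroup V] (R : Subgroup G)
    (c : R → R → V)
    (hl : ∀ r r' s, c (r * r') s = c r s + c r' s)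
    (hr : ∀ r s s', c r (s * s') = c r s + c r s')
    (hs : ∀ r s, c r s = - c s r) (hz : ∀ r, c r r = 0)
    (κ : G → R) (τ : R → R) (h1 : κ 1 = 1)
    (hκ : ∀ (r : R) g, κ (r * g) = τ r * κ g ∨ κ (r * g) = κ g * τ r) :
    ∃ Q : G → V, Q 1 = 0 ∧ ∀ (r : R) g, Q (r * g) = Q r + Q g + c (τ r) (κ g) := by
  obtain ⟨Q, hQ1, hQ⟩ := exists_increment (fun g k => c (κ g) (κ k))
  refine ⟨Q, hQ1, fun r g => ?_⟩
  have hl' : ∀ (r : R) g s, c (κ (r * g)) s = c (τ r) s + c (κ g) s := by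
    intro r g s
    rcases hκ r g with h | h
    · rw [h, hl]
    · rw [h, hl, add_comm]
  have hr' : ∀ (r : R) g s, c s (κ (r * g)) = c s (τ r) + c s (κ g) := by
    intro r g s
    rcases hκ r g with h | h
    · rw [h, hr]
    · rw [h, hr, add_comm]
  have hone : ∀ s, c s 1 = 0 := fun s => by
    have := hr s 1 1
    simpa using this
  have := const_of_increment (fun g => Q (r * g) - Q g - c (τ r) (κ g)) ?_ g
  · simp only [mul_one, hQ1, h1, hone, sub_zero] at this
    rw [← this]
    abel
  · intro g x
    rw [← mul_assoc, hQ, hQ, mul_assoc, hl', hr', hr', hz, hs (κ g) (τ r)]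
    abel

theorem exists_lam {G V : Type} [Group G] [IsFreeGroup G] [AddCommGroup V] (R : Subgroup G)
    [R.Normal] (c : R → R → V)
    (hl : ∀ r r' s, c (r * r') s = c r s + c r' s)
    (hr : ∀ r s s', c r (s * s') = c r s + c r s')
    (hs : ∀ r s, c r s = - c s r) (hz : ∀ r, c r r = 0)
    (hc : ∀ g r s, c (cj R g r) (cj R g s) = c r s)
    (κ : G → R) (h1 : κ 1 = 1) (hκ : ∀ (r : R) g, κ (r * g) = r * κ g) :
    ∃ lam : G → V, lam 1 = 0 ∧ ThirdDiff ⊤ R lam ∧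
      ∀ r s : R, lam (r * s) = lam r + lam s - (c r s + c r s) := by
  have hinv : ∀ r s, c r⁻¹ s = - c r s := fun r s => by
    have h0 := hl 1 1 s
    have := hl r⁻¹ r s
    simp only [mul_one, inv_mul_cancel, left_eq_add] at h0 this
    rw [h0] at this
    exact eq_neg_of_add_eq_zero_left this.symm
  obtain ⟨Q, hQ1, hQ⟩ := exists_quad R c hl hr hs hz κ id h1 (fun r g => Or.inl (hκ r g))
  simp only [id_eq] at hQ
  have hκr : ∀ r : R, κ r = r := fun r => by
    have := hκ r 1
    simpa [h1] using this
  let κ' : G → R := fun g => cj R g (κ g⁻¹)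
  obtain ⟨Q', hQ'1, hQ'⟩ := exists_quad R c hl hr hs hz κ' (fun r => r⁻¹)
    (by simp [κ', cj, h1]) (fun r g => by
      right
      have e : ((r : G) * g)⁻¹ = ((cj R g⁻¹ r⁻¹ : R) : G) * g⁻¹ := by
        simp [cj]
      simp only [κ']
      rw [e, hκ]
      apply Subtype.ext
      simp [cj, mul_assoc])
  have hQ2 : ∀ g (r : R), Q' ((g * r)⁻¹) = Q' (r : G)⁻¹ + Q' g⁻¹ + c r (cj R g⁻¹ (κ g)) := by
    intro g r
    have := hQ' r⁻¹ g⁻¹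
    simp only [inv_inv, κ'] at this
    rw [mul_inv_rev]
    exact this
  refine ⟨fun g => Q' g⁻¹ - Q g, by simp [hQ1, hQ'1], ?_, ?_⟩
  · have main : ∀ (s : G) (r : R) (t : G),
        (Q' (s * r * t)⁻¹ - Q (s * r * t)) - (Q' (s * r)⁻¹ - Q (s * r))
        - (Q' (s * t)⁻¹ - Q (s * t)) - (Q' (r * t)⁻¹ - Q (r * t))
        + (Q' s⁻¹ - Q s) + (Q' (r : G)⁻¹ - Q r) + (Q' t⁻¹ - Q t) = 0 := by
      intro s r t
      have a1 : Q (s * r * t) = Q (cj R s r) + Q (s * t) + c (cj R s r) (κ (s * t)) := by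
        rw [← hQ]; congr 1; simp [cj, mul_assoc]
      have a2 : Q (s * r) = Q (cj R s r) + Q s + c (cj R s r) (κ s) := by
        rw [← hQ]; congr 1; simp [cj, mul_assoc]
      have a3 : Q (r * t) = Q r + Q t + c r (κ t) := hQ r t
      have b1 : Q' (s * r * t)⁻¹ = Q' ((cj R t⁻¹ r : R) : G)⁻¹ + Q' (s * t)⁻¹
          + c (cj R t⁻¹ r) (cj R (s * t)⁻¹ (κ (s * t))) := by
        rw [← hQ2]; congr 1; simp [cj, mul_assoc]
      have b2 : Q' (r * t)⁻¹ = Q' ((cj R t⁻¹ r : R) : G)⁻¹ + Q' t⁻¹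
          + c (cj R t⁻¹ r) (cj R t⁻¹ (κ t)) := by
        rw [← hQ2]; congr 1; simp [cj, mul_assoc]
      have b3 : Q' (s * r)⁻¹ = Q' (r : G)⁻¹ + Q' s⁻¹ + c r (cj R s⁻¹ (κ s)) := hQ2 s r
      have cjm : ∀ a b (r : R), cj R a (cj R b r) = cj R (a * b) r := by
        intro a b r
        apply Subtype.ext
        simp [cj, mul_assoc]
      have cj1 : ∀ r : R, cj R 1 r = r := fun r => by simp [cj]
      have d1 : c (cj R t⁻¹ r) (cj R (s * t)⁻¹ (κ (s * t))) = c (cj R s r) (κ (s * t)) := by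
        rw [← hc (s * t), cjm, cjm]; simp [cj1]
      have d2 : c (cj R t⁻¹ r) (cj R t⁻¹ (κ t)) = c r (κ t) := hc _ _ _
      have d3 : c r (cj R s⁻¹ (κ s)) = c (cj R s r) (κ s) := by
        rw [← hc s, cjm]; simp [cj1]
      rw [a1, a2, a3, b1, b2, b3, d1, d2, d3]
      abel
    intro s _ r hr t _ g
    have m1 := main s ⟨r, hr⟩ (t * g)
    have m2 := main s ⟨r, hr⟩ g
    simp only [← mul_assoc] at m1 m2
    rw [← sub_eq_zero.mpr (m1.trans m2.symm)]
    simp only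
    abel
  · intro r s
    have e1 := hQ r s
    have e2 := hQ2 r s
    rw [hκr] at e1 e2
    have e3 : c s (cj R (r : G)⁻¹ r) = - c r s := by
      rw [hs s]; congr 2; simp [cj]
    simp only
    rw [e1, e2, e3]
    abel

theorem exists_kappa {G : Type} [Group G] (R : Subgroup G) [hR : R.Normal] :
    ∃ κ : G → R, κ 1 = 1 ∧ ∀ (r : R) g, κ (r * g) = r * κ g := by
  let s : G → G := fun g => Quotient.out (g : G ⧸ R)
  have hs : ∀ g, g * (s g)⁻¹ ∈ R := by
    intro g
    have h : ((s g : G) : G ⧸ R) = (g : G ⧸ R) := QuotientGroup.out_eq' _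
    rw [eq_comm, QuotientGroup.eq] at h
    have := hR.mem_comm h
    have := R.inv_mem this
    simpa using this
  have hsr : ∀ (r : R) g, s (r * g) = s g := by
    intro r g
    have : (((r : G) * g : G) : G ⧸ R) = (g : G ⧸ R) := by
      rw [QuotientGroup.eq]
      have h := hR.conj_mem _ (R.inv_mem r.2) g⁻¹
      simpa [mul_assoc] using h
    simp only [s, this]
  refine ⟨fun g => ⟨g * (s g)⁻¹, hs g⟩ * ⟨1 * (s 1)⁻¹, hs 1⟩⁻¹, by simp, ?_⟩
  intro r g
  rw [← mul_assoc]
  apply Subtype.ext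
  simp [hsr, mul_assoc]

theorem core_comm {G : Type} [Group G] (R : Subgroup G) [R.Normal] (a : G)
    (haR : a ∈ R)
    (H : ∀ (V : Type) [AddCommGroup V] (φ : G → V), ThirdDiff ⊤ R φ → φ a = φ 1) :
    a ∈ ⁅R, R⁆ := by
  obtain ⟨κ, h1, hκ⟩ := exists_kappa R
  have hd : ThirdDiff ⊤ R (fun g => Additive.ofMul (Abelianization.of (κ g))) := by
    intro s _ r hr t _ g
    have e : ∀ k : G, κ (s * (r * k)) = cj R s ⟨r, hr⟩ * κ (s * k) := by
      intro k
      rw [← hκ]; congr 1; simp [cj, mul_assoc]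
    have e' : ∀ k : G, κ (r * k) = ⟨r, hr⟩ * κ k := fun k => hκ ⟨r, hr⟩ k
    simp only [mul_assoc, e, e', map_mul, ofMul_mul]
    abel
  have h := H _ _ hd
  have hk : κ a = ⟨a, haR⟩ := by
    have := hκ ⟨a, haR⟩ 1
    simpa [h1] using this
  simp only [hk, h1, map_one, ofMul_one] at h
  have h' : Abelianization.of (⟨a, haR⟩ : R) = 1 := h
  have h2 : (⟨a, haR⟩ : R) ∈ commutator R := by
    rw [← Abelianization.ker_of]; exact h'
  rw [← Subgroup.map_subtype_commutator]
  exact ⟨_, h2, rfl⟩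

section
open scoped commutatorElement

theorem core_final {G : Type} [Group G] [IsFreeGroup G] (R : Subgroup G) [R.Normal] (a : G)
    (haR : a ∈ R)
    (H : ∀ (V : Type) [AddCommGroup V] (φ : G → V), ThirdDiff ⊤ R φ → φ a = φ 1) :
    a ^ 4 ∈ ⁅⁅R, R⁆, (⊤ : Subgroup G)⁆ := by
  have haC := core_comm R a haR H
  obtain ⟨κ, h1, hκ⟩ := exists_kappa R
  let N : Subgroup G := ⁅⁅R, R⁆, (⊤ : Subgroup G)⁆
  let π : G →* G ⧸ N := QuotientGroup.mk' N
  have hcen : ∀ x ∈ ⁅R, R⁆, π x ∈ Subgroup.center (G ⧸ N) := by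
    intro x hx
    rw [Subgroup.mem_center_iff]
    intro y
    obtain ⟨y, rfl⟩ := QuotientGroup.mk'_surjective N y
    have : ⁅x, y⁆ ∈ N := Subgroup.commutator_mem_commutator hx trivial
    have h2 : π ⁅x, y⁆ = 1 := (QuotientGroup.eq_one_iff _).mpr this
    rw [map_commutatorElement, commutatorElement_eq_one_iff_mul_comm] at h2
    exact h2.symm
  have hcomm : ∀ r s : R, π ⁅(r : G), (s : G)⁆ ∈ Subgroup.center (G ⧸ N) := fun r s =>
    hcen _ (Subgroup.commutator_mem_commutator r.2 s.2)
  letI : CommGroup (Subgroup.center (G ⧸ N)) :=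
    { (inferInstance : Group (Subgroup.center (G ⧸ N))) with
      mul_comm := fun x y => Subtype.ext (Subgroup.mem_center_iff.mp y.2 x) }
  let c : R → R → Additive (Subgroup.center (G ⧸ N)) := fun r s =>
    Additive.ofMul ⟨π ⁅(r : G), (s : G)⁆, hcomm r s⟩
  have hconj : ∀ x ∈ Subgroup.center (G ⧸ N), ∀ y, y * x * y⁻¹ = x := by
    intro x hx y
    rw [Subgroup.mem_center_iff] at hx
    rw [hx y]; simp
  have hl : ∀ r r' s, c (r * r') s = c r s + c r' s := by
    intro r r' s
    apply Additive.toMul.injective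
    apply Subtype.ext
    change π ⁅((r * r' : R) : G), (s : G)⁆ = π ⁅(r : G), (s : G)⁆ * π ⁅(r' : G), (s : G)⁆
    have h3 := hconj _ (hcomm r' s) (π r)
    have h4 : ⁅((r * r' : R) : G), (s : G)⁆ =
        (r * ⁅(r' : G), (s : G)⁆ * (r : G)⁻¹) * ⁅(r : G), (s : G)⁆ := by
      simp only [commutatorElement_def, Subgroup.coe_mul]; group
    rw [h4, map_mul, map_mul, map_mul, map_inv, h3]
    exact (Subgroup.mem_center_iff.mp (hcomm r s) _)
  have hs : ∀ r s, c r s = - c s r := by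
    intro r s
    apply Additive.toMul.injective
    apply Subtype.ext
    change π ⁅(r : G), (s : G)⁆ = (π ⁅(s : G), (r : G)⁆)⁻¹
    rw [← map_inv, commutatorElement_inv]
  have hr : ∀ r s s', c r (s * s') = c r s + c r s' := by
    intro r s s'
    have e := hl s s' r
    rw [hs r (s * s'), e, neg_add, ← hs r s, ← hs r s']
  have hz : ∀ r, c r r = 0 := by
    intro r
    apply Additive.toMul.injective
    apply Subtype.ext
    change π ⁅(r : G), (r : G)⁆ = 1
    rw [commutatorElement_self, map_one]
  have hc : ∀ g r s, c (cj R g r) (cj R g s) = c r s := by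
    intro g r s
    apply Additive.toMul.injective
    apply Subtype.ext
    change π ⁅g * r * g⁻¹, g * s * g⁻¹⁆ = π ⁅(r : G), (s : G)⁆
    rw [← conjugate_commutatorElement, map_mul, map_mul, map_inv]
    exact hconj _ (hcomm r s) _
  obtain ⟨lam, hlam1, hd, hlam⟩ := exists_lam R c hl hr hs hz hc κ h1 hκ
  have hla : lam a = 0 := (H _ lam hd).trans hlam1
  have hcz : ∀ r s : R, (r : G) ∈ ⁅R, R⁆ → c r s = 0 := by
    intro r s h
    apply Additive.toMul.injective
    apply Subtype.ext
    change π ⁅(r : G), (s : G)⁆ = 1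
    exact (QuotientGroup.eq_one_iff _).mpr (Subgroup.commutator_mem_commutator h trivial)
  have hle : ⁅R, R⁆ ≤ R := Subgroup.commutator_le_self R
  have hadd : ∀ x ∈ ⁅R, R⁆, ∀ y ∈ R, lam (x * y) = lam x + lam y := by
    intro x hx y hy
    have := hlam ⟨x, hle hx⟩ ⟨y, hy⟩
    rw [hcz _ _ hx] at this
    simpa using this
  let lamM : ↥⁅R, R⁆ →* Subgroup.center (G ⧸ N) :=
    MonoidHom.mk' (fun x => (lam x).toMul) (fun x y => by
      change (lam (x * y)).toMul = _
      rw [hadd x x.2 y (hle y.2)]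
      rfl)
  let piM : ↥⁅R, R⁆ →* Subgroup.center (G ⧸ N) :=
    (π.comp (Subgroup.subtype _)).codRestrict _ (fun x => hcen x x.2)
  have key : ∀ x (hx : x ∈ ⁅R, R⁆), lamM ⟨x, hx⟩ * (piM ⟨x, hx⟩) ^ 4 = 1 := by
    intro x hx
    induction hx using Subgroup.closure_induction with
    | mem x hx =>
      obtain ⟨r, hr, s, hs', rfl⟩ := hx
      have hm : ⁅r, s⁆ ∈ ⁅R, R⁆ := Subgroup.commutator_mem_commutator hr hs'
      have e1 := hadd _ hm (s * r) (R.mul_mem hs' hr)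
      have e2 : ⁅r, s⁆ * (s * r) = r * s := by simp [commutatorElement_def]
      have e3 := hlam ⟨r, hr⟩ ⟨s, hs'⟩
      have e4 := hlam ⟨s, hs'⟩ ⟨r, hr⟩
      rw [hs ⟨s, hs'⟩ ⟨r, hr⟩] at e4
      simp only at e3 e4
      rw [e2, e3, e4] at e1
      have e5 : lam ⁅r, s⁆ + (4 : ℕ) • c ⟨r, hr⟩ ⟨s, hs'⟩ = 0 := by
        have : lam ⁅r, s⁆ = lam r + lam s - (c ⟨r, hr⟩ ⟨s, hs'⟩ + c ⟨r, hr⟩ ⟨s, hs'⟩)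
          - (lam s + lam r - (-c ⟨r, hr⟩ ⟨s, hs'⟩ + -c ⟨r, hr⟩ ⟨s, hs'⟩)) := by
          rw [e1]; abel
        rw [this]; abel
      exact e5
    | one => 
      have := (1 : ↥⁅R, R⁆)
      change lamM 1 * (piM 1) ^ 4 = 1
      simp
    | mul x y hx hy ihx ihy =>
      change lamM (⟨x, hx⟩ * ⟨y, hy⟩) * (piM (⟨x, hx⟩ * ⟨y, hy⟩)) ^ 4 = 1
      rw [map_mul, map_mul, mul_pow, mul_mul_mul_comm]
      erw [ihx, ihy]
      simp
    | inv x hx ih =>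
      change lamM (⟨x, hx⟩⁻¹) * (piM (⟨x, hx⟩⁻¹)) ^ 4 = 1
      rw [map_inv, map_inv, inv_pow, ← mul_inv]
      erw [ih]
      simp
  have h5 := key a haC
  have h6 : lamM ⟨a, haC⟩ = 1 := hla
  rw [h6, one_mul] at h5
  have h7 : π (a ^ 4) = 1 := by
    rw [map_pow]
    exact congrArg Subtype.val h5
  exact (QuotientGroup.eq_one_iff _).mp h7

end

/-- if `R ⊆ S`, `R ⊆ T` and `a ∈ D(F, 𝐬𝐫𝐭 + 𝐭𝐫𝐬)`, then
`a⁴ ∈ [R, R, ST]`. -/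
theorem stohr_fourth_power (F : Type) [Group F] [IsFreeGroup F]
    (R S T : Subgroup F) [R.Normal] [S.Normal] [T.Normal]
    (hRS : R ≤ S) (hRT : R ≤ T) (a : F)
    (ha : (MonoidAlgebra.of ℤ F a) - 1 ∈ augI S * augI R * augI T + augI T * augI R * augI S) :
    a ^ 4 ∈ ⁅⁅R, R⁆, S ⊔ T⁆ := by
  have haR := mem_of_thirdDiff R S T a ha
  have hle : R ≤ S ⊔ T := hRS.trans le_sup_left
  have haH : a ∈ S ⊔ T := hle haR
  have h := core_final (R.subgroupOf (S ⊔ T)) ⟨a, haH⟩ haR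
    (fun V _ φ hφ => eq_of_thirdDiff_sub R S T hRS a ha haH φ hφ)
  have h2 := Subgroup.mem_map_of_mem (S ⊔ T).subtype h
  rw [Subgroup.map_commutator, Subgroup.map_commutator, Subgroup.subgroupOf_map_subtype,
    inf_eq_left.mpr hle, ← MonoidHom.range_eq_map, Subgroup.range_subtype] at h2
  simpa using h2
end
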